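/- Let N be a non-quasianalytic weight sequence of moderate growth, i.e., ∑_k 1/ν_k < ∞ and there exists C ≥ 1 with N_{j+k} ≤ C^{j+k} N_j N_k for all j, k. Then the descendant S of N has moderate growth, and for every compact E ⊆ ℝ^n the jet mapping j_E^∞ : B^{N}(ℝ^n) → B^{S}(E) is surjective: every Whitney jet of class B^{S} on E is the jet of a function in B^{N}(ℝ^n). -/

import Mathlib

open Filter

/-! The extension glues Taylor polynomials of increasing degree on shrinking scales, and sums the
resulting telescoping series.

*The descendant.* Moderate growth of `N` is equivalent to `ν` being doubling, `ν_{2p} ≤ H ν_p`, and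
it gives `ν_p^p ≤ H^p N_p` (`exists_doubling`). Doubling passes to `τ`, hence to `σ`, and doubling
of `σ` gives moderate growth of `S` (`sigmaSeq_doubling`, `moderate_of_doubling`).

*Cutoffs.* Averaging a step function over half-widths `(4τ_p)⁻¹ / ν_{max(i,p)}`, `i ≥ 1`, gives a
smooth step: the half-widths are summable with sum at most `1/4`, since
`∑_i 1/ν_{max(i,p)} ≤ τ_p`. Its `k`-th derivative is at most `(4τ_p)^k ∏_{i ≤ k} ν_{max(i,p)}`,
which is at most `H^p (4τ_p)^k N_k`. Tensor products of differences of such steps, scaled to a grid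
of mesh `r`, form a partition of unity with bounds `(2H^p)^n (4τ_p/r)^k N_k`
(`exists_cutoffSystem`). On the scale `r = τ_p/L`, with `L` independent of `p`, the rate `4τ_p/r` is
constant, and only the prefactor grows, geometrically in `p`.

*Taylor estimates.* The definition of `σ` makes `S_q D^{q-k}/(q-k)!` at most
`2^q η^{q-k} S_k` whenever `τ_1 D ≤ η τ_q` (`descendant_small`), and `S_k ≤ τ_1^k N_k`. Together
with Whitney's remainder estimates this shows that Taylor polynomials of degrees `p` and `p + 1`, at
points of `E` within distance `D` of each other and of `x`, differ at `x` by at most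
`C (4^{n+1} ρ η)^{p+1} (τ_1/η)^k N_k` in the `k`-th derivatives, when `τ_1 D ≤ η τ_{p+1}`
(`wordD_Tpoly_sub_le`).

*Summation.* Let `G_p` glue the Taylor polynomials of degree `p + 1` with the cutoffs of scale
`τ_{p+1}/L`. Once `η` is small, the factor `η^p` beats the geometric growth of the cutoffs, so there
are functions `J_p`, equal to `G_{p+1} - G_p` near `E`, which are `O(2^{-p})` in one fixed norm of
class `N`. Then `f = G_0 + ∑ J_p` is of class `N`. At a point `a` of `E` its derivatives are the
limits of those of `G_p`, which differ from those of the Taylor polynomial at `a` by `O(2^{-p})`;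
so `f` has the prescribed jet (`exists_extension`).
-/

/-- The tail sum `∑_{j ≥ k} 1/ν_j`. -/
noncomputable def tailSum (ν : ℕ → ℝ) (k : ℕ) : ℝ := ∑' i : ℕ, 1 / ν (i + k)

/-- `τ_k = k/ν_k + ∑_{j ≥ k} 1/ν_j` (for `k ≥ 1`). -/
noncomputable def tauSeq (ν : ℕ → ℝ) (k : ℕ) : ℝ := (k : ℝ) / ν k + tailSum ν k

/-- The descendant `σ` of `ν`: `σ_0 = 1`, `σ_k = τ_1 k / τ_k` for `k ≥ 1`. -/
noncomputable def sigmaSeq (ν : ℕ → ℝ) : ℕ → ℝ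
  | 0 => 1
  | (k + 1) => tauSeq ν 1 * ((k : ℝ) + 1) / tauSeq ν (k + 1)

/-- `N_k = ν_0 ν_1 ⋯ ν_k`. -/
noncomputable def prodSeq (ν : ℕ → ℝ) (k : ℕ) : ℝ := ∏ i ∈ Finset.range (k + 1), ν i

/-- `h_s(t) = inf_k s_k t^k`. -/
noncomputable def hFun (s : ℕ → ℝ) (t : ℝ) : ℝ := ⨅ k : ℕ, s k * t ^ k

/-- `s_k = S_k / k!`, where `S` is the descendant of `ν`. -/
noncomputable def smallS (ν : ℕ → ℝ) (k : ℕ) : ℝ :=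
  prodSeq (sigmaSeq ν) k / (Nat.factorial k : ℝ)

/-- The finite set of multi-indices `α ∈ ℕ^n` with `|α| ≤ p`. -/
noncomputable def midx (n p : ℕ) : Finset (Fin n → ℕ) :=
  (Fintype.piFinset fun _ : Fin n => Finset.range (p + 1)).filter (fun α => ∑ i, α i ≤ p)

/-- The Taylor polynomial `T_a^p F (x) = ∑_{|α| ≤ p} (x-a)^α F^α(a) / α!` of a jet `F`. -/
noncomputable def Tpoly {n : ℕ} (F : (Fin n → ℕ) → EuclideanSpace ℝ (Fin n) → ℝ)
    (a : EuclideanSpace ℝ (Fin n)) (p : ℕ) : EuclideanSpace ℝ (Fin n) → ℝ :=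
  fun x => ∑ α ∈ midx n p, (∏ i, (x i - a i) ^ (α i) / (Nat.factorial (α i) : ℝ)) * F α a

/-- The Whitney remainder `(R_a^p F)^α(x) = F^α(x) − ∑_{|β| ≤ p-|α|} (x-a)^β F^{α+β}(a)/β!`. -/
noncomputable def Rrem {n : ℕ} (F : (Fin n → ℕ) → EuclideanSpace ℝ (Fin n) → ℝ)
    (a : EuclideanSpace ℝ (Fin n)) (p : ℕ) (α : Fin n → ℕ)
    (x : EuclideanSpace ℝ (Fin n)) : ℝ :=
  F α x - ∑ β ∈ midx n (p - ∑ i, α i),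
    (∏ i, (x i - a i) ^ (β i) / (Nat.factorial (β i) : ℝ)) * F (α + β) a

/-- The partial derivative `∂_i f` of a function on `ℝ^n`. -/
noncomputable def pderivE {n : ℕ} (i : Fin n) (f : EuclideanSpace ℝ (Fin n) → ℝ) :
    EuclideanSpace ℝ (Fin n) → ℝ :=
  fun x => fderiv ℝ f x (EuclideanSpace.single i 1)

/-- The partial derivative `∂^β f` of a function on `ℝ^n` for a multi-index `β`. -/
noncomputable def pderivMulti {n : ℕ} (β : Fin n → ℕ) (f : EuclideanSpace ℝ (Fin n) → ℝ) :
    EuclideanSpace ℝ (Fin n) → ℝ :=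
  (List.finRange n).foldr (fun i g => (pderivE i)^[β i] g) f

/-- `F` is a Whitney jet of class `B^{M}` on `E` (Definition 3.3). -/
def IsWhitneyJet {n : ℕ} (M : ℕ → ℝ) (E : Set (EuclideanSpace ℝ (Fin n)))
    (F : (Fin n → ℕ) → EuclideanSpace ℝ (Fin n) → ℝ) : Prop :=
  (∀ α, ContinuousOn (F α) E) ∧
  ∃ C > 0, ∃ ρ > 0,
    (∀ α : Fin n → ℕ, ∀ a ∈ E, |F α a| ≤ C * ρ ^ (∑ i, α i) * M (∑ i, α i)) ∧
    (∀ p : ℕ, ∀ α : Fin n → ℕ, ∑ i, α i ≤ p → ∀ a ∈ E, ∀ b ∈ E,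
      |Rrem F a p α b| ≤ C * ρ ^ (p + 1) * M (p + 1) *
        ‖b - a‖ ^ (p + 1 - ∑ i, α i) / (Nat.factorial (p + 1 - ∑ i, α i) : ℝ))

/-- `f ∈ B^{M}(ℝ^n)`: `f` is smooth with global derivative bounds `C ρ^{|α|} M_{|α|}`. -/
def MemBM {n : ℕ} (M : ℕ → ℝ) (f : EuclideanSpace ℝ (Fin n) → ℝ) : Prop :=
  ContDiff ℝ (⊤ : ℕ∞) f ∧
  ∃ C > 0, ∃ ρ > 0, ∀ α : Fin n → ℕ, ∀ x : EuclideanSpace ℝ (Fin n),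
    |pderivMulti α f x| ≤ C * ρ ^ (∑ i, α i) * M (∑ i, α i)

/-! ### Weight sequences and descendants -/

section Weights

variable {ν : ℕ → ℝ}

lemma prodSeq_zero (hν0 : ν 0 = 1) : prodSeq ν 0 = 1 := by simp [prodSeq, hν0]

lemma prodSeq_succ (ν : ℕ → ℝ) (k : ℕ) : prodSeq ν (k + 1) = prodSeq ν k * ν (k + 1) := by
  unfold prodSeq; rw [Finset.prod_range_succ]

lemma prodSeq_pos (hνpos : ∀ k, 0 < ν k) (k : ℕ) : 0 < prodSeq ν k :=
  Finset.prod_pos fun i _ => hνpos i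

/-- Log-convexity, in the form `N_j N_k ≤ N_{j+k}`. -/
lemma prodSeq_mul_le (hνpos : ∀ k, 0 < ν k) (hνmono : Monotone ν) (hν0 : ν 0 = 1) (j k : ℕ) :
    prodSeq ν j * prodSeq ν k ≤ prodSeq ν (j + k) := by
  induction k with
  | zero => simp [prodSeq_zero hν0]
  | succ k ih =>
    rw [← add_assoc, prodSeq_succ, prodSeq_succ, ← mul_assoc]
    exact mul_le_mul ih (hνmono (by omega)) (hνpos _).le (prodSeq_pos hνpos _).le

lemma prodSeq_prod_le (hνpos : ∀ k, 0 < ν k) (hνmono : Monotone ν) (hν0 : ν 0 = 1)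
    {ι : Type*} (s : Finset ι) (β : ι → ℕ) :
    ∏ i ∈ s, prodSeq ν (β i) ≤ prodSeq ν (∑ i ∈ s, β i) := by
  classical
  induction s using Finset.induction_on with
  | empty => simp [prodSeq_zero hν0]
  | insert a s ha ih =>
    rw [Finset.prod_insert ha, Finset.sum_insert ha]
    exact (mul_le_mul_of_nonneg_left ih (prodSeq_pos hνpos _).le).trans
      (prodSeq_mul_le hνpos hνmono hν0 _ _)

lemma prodSeq_mul_pow_le (hνpos : ∀ k, 0 < ν k) (hνmono : Monotone ν) (p m : ℕ) :
    prodSeq ν p * ν p ^ m ≤ prodSeq ν (p + m) := by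
  induction m with
  | zero => simp
  | succ m ih =>
    rw [← add_assoc, prodSeq_succ, pow_succ, ← mul_assoc]
    exact mul_le_mul ih (hνmono (by omega)) (hνpos _).le (prodSeq_pos hνpos _).le

lemma prodSeq_le_pow (hνpos : ∀ k, 0 < ν k) (hνmono : Monotone ν) (hν0 : ν 0 = 1) (p : ℕ) :
    prodSeq ν p ≤ ν p ^ p := by
  induction p with
  | zero => simp [prodSeq_zero hν0]
  | succ p ih =>
    rw [prodSeq_succ, pow_succ]
    exact mul_le_mul_of_nonneg_right
      (ih.trans (pow_le_pow_left₀ (hνpos _).le (hνmono (by omega)) _)) (hνpos _).le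

/-- Moderate growth of `N` bounds `ν_p` by a multiple of `N_p^{1/p}`, and `ν` is doubling. -/
lemma exists_doubling (hνpos : ∀ k, 0 < ν k) (hνmono : Monotone ν) (hν0 : ν 0 = 1)
    (hmg : ∃ C : ℝ, 1 ≤ C ∧ ∀ j k : ℕ,
      prodSeq ν (j + k) ≤ C ^ (j + k) * prodSeq ν j * prodSeq ν k) :
    ∃ H : ℝ, 1 ≤ H ∧ (∀ p, ν p ^ p ≤ H ^ p * prodSeq ν p) ∧ ∀ p, ν (2 * p) ≤ H * ν p := by
  obtain ⟨C, hC, h⟩ := hmg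
  have key : ∀ p, ν p ^ p ≤ (C ^ 2) ^ p * prodSeq ν p := by
    intro p
    have h1 := (prodSeq_mul_pow_le hνpos hνmono p p).trans (h p p)
    have h2 : C ^ (p + p) * prodSeq ν p * prodSeq ν p
        = prodSeq ν p * ((C ^ 2) ^ p * prodSeq ν p) := by
      rw [← pow_mul, two_mul]; ring
    rw [h2] at h1
    exact le_of_mul_le_mul_left h1 (prodSeq_pos hνpos p)
  refine ⟨C ^ 3, one_le_pow₀ hC, fun p => (key p).trans ?_, fun p => ?_⟩
  · have := prodSeq_pos hνpos p
    have h32 : C ^ 2 ≤ C ^ 3 := pow_le_pow_right₀ hC (by norm_num)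
    gcongr
  · rcases Nat.eq_zero_or_pos p with rfl | hp
    · have : 1 ≤ C ^ 3 := one_le_pow₀ hC
      simpa [hν0] using this
    · have h1 : ν (2 * p) ^ (2 * p) ≤ (C ^ 3 * ν p) ^ (2 * p) := by
        calc ν (2 * p) ^ (2 * p) ≤ (C ^ 2) ^ (2 * p) * prodSeq ν (2 * p) := key _
          _ ≤ (C ^ 2) ^ (2 * p) * (C ^ (p + p) * prodSeq ν p * prodSeq ν p) := by
            have := h p p
            rw [← two_mul] at this ⊢
            gcongr
          _ ≤ (C ^ 2) ^ (2 * p) * (C ^ (p + p) * ν p ^ p * ν p ^ p) := by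
            have := prodSeq_pos hνpos p
            have hν := hνpos p
            have h2 := prodSeq_le_pow hνpos hνmono hν0 p
            gcongr
          _ = (C ^ 3 * ν p) ^ (2 * p) := by
            rw [mul_pow, ← pow_mul, ← pow_mul, two_mul p, pow_add (ν p)]
            ring
      exact le_of_pow_le_pow_left₀ (by omega)
        (mul_nonneg (by positivity) (hνpos _).le) h1

lemma tailSum_eq (hnq : Summable fun k => 1 / ν k) (k : ℕ) :
    tailSum ν k = 1 / ν k + tailSum ν (k + 1) := by
  unfold tailSum
  rw [((summable_nat_add_iff k).2 hnq).tsum_eq_zero_add]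
  simp [add_comm, add_left_comm]

lemma tailSum_nonneg (hνpos : ∀ k, 0 < ν k) (k : ℕ) : 0 ≤ tailSum ν k :=
  tsum_nonneg fun _ => (one_div_pos.2 (hνpos _)).le

lemma tailSum_pos (hνpos : ∀ k, 0 < ν k) (hnq : Summable fun k => 1 / ν k) (k : ℕ) :
    0 < tailSum ν k := by
  rw [tailSum_eq hnq]
  exact add_pos_of_pos_of_nonneg (one_div_pos.2 (hνpos _)) (tailSum_nonneg hνpos _)

lemma tauSeq_pos (hνpos : ∀ k, 0 < ν k) (hnq : Summable fun k => 1 / ν k) (k : ℕ) :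
    0 < tauSeq ν k :=
  add_pos_of_nonneg_of_pos (div_nonneg (Nat.cast_nonneg _) (hνpos _).le) (tailSum_pos hνpos hnq k)

lemma tauSeq_anti (hνpos : ∀ k, 0 < ν k) (hνmono : Monotone ν)
    (hnq : Summable fun k => 1 / ν k) : Antitone (tauSeq ν) := by
  refine antitone_nat_of_succ_le fun k => ?_
  unfold tauSeq
  rw [tailSum_eq hnq k]
  have h : 1 / ν (k + 1) ≤ 1 / ν k := one_div_le_one_div_of_le (hνpos _) (hνmono (by omega))
  have h2 : ((k : ℝ) + 1) * (1 / ν (k + 1)) ≤ (k + 1) * (1 / ν k) := by gcongr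
  have e1 : ((k + 1 : ℕ) : ℝ) / ν (k + 1) = ((k : ℝ) + 1) * (1 / ν (k + 1)) := by
    push_cast; ring
  rw [e1]
  linarith [h2, show ((k : ℝ) + 1) * (1 / ν k) = k / ν k + 1 / ν k by ring]

lemma tailSum_le (hνpos : ∀ k, 0 < ν k) (hνmono : Monotone ν)
    (hnq : Summable fun k => 1 / ν k) (k m : ℕ) :
    tailSum ν k ≤ m / ν k + tailSum ν (k + m) := by
  induction m with
  | zero => simp
  | succ m ih =>
    rw [tailSum_eq hnq (k + m)] at ih
    have h : 1 / ν (k + m) ≤ 1 / ν k := one_div_le_one_div_of_le (hνpos _) (hνmono (by omega))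
    have e : ((m + 1 : ℕ) : ℝ) / ν k = m / ν k + 1 / ν k := by push_cast; ring
    rw [e, ← add_assoc k m 1]
    linarith

lemma tauSeq_doubling (hνpos : ∀ k, 0 < ν k) (hνmono : Monotone ν)
    (hnq : Summable fun k => 1 / ν k) {H : ℝ} (hH : 1 ≤ H) (hd : ∀ p, ν (2 * p) ≤ H * ν p)
    (p : ℕ) : tauSeq ν p ≤ H * tauSeq ν (2 * p) := by
  unfold tauSeq
  have h1 := tailSum_le hνpos hνmono hnq p p
  rw [← two_mul] at h1
  have h2 : 1 / ν p ≤ H * (1 / ν (2 * p)) := by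
    rw [mul_one_div, div_le_div_iff₀ (hνpos _) (hνpos _), one_mul]
    exact hd p
  have h3 : tailSum ν (2 * p) ≤ H * tailSum ν (2 * p) :=
    le_mul_of_one_le_left (tailSum_nonneg hνpos _) hH
  have h4 : 2 * (p : ℝ) * (1 / ν p) ≤ 2 * p * (H * (1 / ν (2 * p))) := by gcongr
  have e1 : ((2 * p : ℕ) : ℝ) / ν (2 * p) = 2 * p * (1 / ν (2 * p)) := by push_cast; ring
  have e2 : (p : ℝ) / ν p = p * (1 / ν p) := by ring
  rw [e1]
  rw [e2] at h1 ⊢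
  nlinarith

lemma tauSeq_succ_ge (hνpos : ∀ k, 0 < ν k) (hνmono : Monotone ν)
    (hnq : Summable fun k => 1 / ν k) {H : ℝ} (hH : 1 ≤ H) (hd : ∀ p, ν (2 * p) ≤ H * ν p)
    {p : ℕ} (hp : 1 ≤ p) : tauSeq ν p ≤ H * tauSeq ν (p + 1) :=
  (tauSeq_doubling hνpos hνmono hnq hH hd p).trans
    (mul_le_mul_of_nonneg_left (tauSeq_anti hνpos hνmono hnq (by omega)) (by linarith))

lemma sigmaSeq_succ (ν : ℕ → ℝ) (k : ℕ) :
    sigmaSeq ν (k + 1) = tauSeq ν 1 * ((k : ℝ) + 1) / tauSeq ν (k + 1) := rfl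

lemma sigmaSeq_pos (hνpos : ∀ k, 0 < ν k) (hnq : Summable fun k => 1 / ν k) (k : ℕ) :
    0 < sigmaSeq ν k := by
  cases k with
  | zero => exact one_pos
  | succ k =>
    have h1 := tauSeq_pos hνpos hnq 1
    have h2 := tauSeq_pos hνpos hnq (k + 1)
    rw [sigmaSeq_succ]; positivity

lemma sigmaSeq_one (hνpos : ∀ k, 0 < ν k) (hnq : Summable fun k => 1 / ν k) :
    sigmaSeq ν 1 = 1 := by
  have h1 := tauSeq_pos hνpos hnq 1
  rw [sigmaSeq_succ]; simp [h1.ne']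

/-- The descendant inherits doubling: `σ_{j+k} ≤ H' σ_j` for `k ≤ j`. -/
lemma sigmaSeq_doubling (hνpos : ∀ k, 0 < ν k) (hνmono : Monotone ν)
    (hnq : Summable fun k => 1 / ν k) {H : ℝ} (hH : 1 ≤ H) (hd : ∀ p, ν (2 * p) ≤ H * ν p)
    (j k : ℕ) (hkj : k ≤ j + 1) :
    sigmaSeq ν (j + 1 + k) ≤ 2 * H * sigmaSeq ν (j + 1) := by
  rw [show j + 1 + k = (j + k) + 1 by ring, sigmaSeq_succ, sigmaSeq_succ]
  have h1 := tauSeq_pos hνpos hnq 1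
  have h2 := tauSeq_pos hνpos hnq (j + k + 1)
  have h3 := tauSeq_pos hνpos hnq (j + 1)
  have h4 : tauSeq ν (j + 1) ≤ H * tauSeq ν (j + k + 1) :=
    (tauSeq_doubling hνpos hνmono hnq hH hd (j + 1)).trans
      (mul_le_mul_of_nonneg_left (tauSeq_anti hνpos hνmono hnq (by omega)) (by linarith))
  have h5 : ((j + k : ℕ) : ℝ) + 1 ≤ 2 * (j + 1) := by
    have : (k : ℝ) ≤ j + 1 := by exact_mod_cast hkj
    push_cast; linarith
  rw [div_le_iff₀ h2]
  calc tauSeq ν 1 * (((j + k : ℕ) : ℝ) + 1) ≤ tauSeq ν 1 * (2 * (j + 1)) := by gcongr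
    _ = 2 * (tauSeq ν 1 * ((j : ℝ) + 1) / tauSeq ν (j + 1)) * tauSeq ν (j + 1) := by
      field_simp
    _ ≤ 2 * (tauSeq ν 1 * ((j : ℝ) + 1) / tauSeq ν (j + 1)) * (H * tauSeq ν (j + k + 1)) := by
      gcongr
    _ = _ := by ring

/-- Peeling a factor off the longer of the two products reduces moderate growth to doubling. -/
lemma moderate_of_doubling {s : ℕ → ℝ} (hs : ∀ k, 0 < s k) (hs0 : s 0 = 1) {H : ℝ} (hH : 1 ≤ H)
    (hd : ∀ j k : ℕ, k ≤ j + 1 → s (j + 1 + k) ≤ H * s (j + 1)) (j k : ℕ) :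
    prodSeq s (j + k) ≤ H ^ (j + k) * prodSeq s j * prodSeq s k := by
  have hpos := prodSeq_pos hs
  induction hm : j + k generalizing j k with
  | zero =>
    obtain ⟨rfl, rfl⟩ : j = 0 ∧ k = 0 := by omega
    simp [prodSeq_zero hs0]
  | succ m ih =>
    rw [prodSeq_succ, pow_succ]
    rcases le_total k j with h | h
    · obtain ⟨j, rfl⟩ : ∃ i, j = i + 1 := ⟨j - 1, by omega⟩
      have e : j + k = m := by omega
      calc _ ≤ (H ^ m * prodSeq s j * prodSeq s k) * (H * s (j + 1)) := by
            refine mul_le_mul (ih _ _ e) ?_ (hs _).le (by have := hpos j; have := hpos k; positivity)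
            rw [show m + 1 = j + 1 + k by omega]; exact hd _ _ h
        _ = _ := by rw [prodSeq_succ]; ring
    · obtain ⟨k, rfl⟩ : ∃ i, k = i + 1 := ⟨k - 1, by omega⟩
      have e : j + k = m := by omega
      calc _ ≤ (H ^ m * prodSeq s j * prodSeq s k) * (H * s (k + 1)) := by
            refine mul_le_mul (ih _ _ e) ?_ (hs _).le (by have := hpos j; have := hpos k; positivity)
            rw [show m + 1 = k + 1 + j by omega]; exact hd _ _ h
        _ = _ := by rw [prodSeq_succ]; ring

/-- `S_k ≤ τ_1^k N_k`, because `τ_k ≥ k/ν_k`. -/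
lemma descendant_le (hνpos : ∀ k, 0 < ν k) (hν0 : ν 0 = 1)
    (hnq : Summable fun k => 1 / ν k) (k : ℕ) :
    prodSeq (sigmaSeq ν) k ≤ tauSeq ν 1 ^ k * prodSeq ν k := by
  have h1 := tauSeq_pos hνpos hnq 1
  induction k with
  | zero => simp [prodSeq_zero hν0, prodSeq_zero (show sigmaSeq ν 0 = 1 from rfl)]
  | succ k ih =>
    rw [prodSeq_succ, prodSeq_succ, pow_succ]
    have h2 : sigmaSeq ν (k + 1) ≤ tauSeq ν 1 * ν (k + 1) := by
      rw [sigmaSeq_succ, div_le_iff₀ (tauSeq_pos hνpos hnq _), mul_assoc]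
      refine mul_le_mul_of_nonneg_left ?_ h1.le
      have : ((k : ℝ) + 1) / ν (k + 1) ≤ tauSeq ν (k + 1) := by
        unfold tauSeq; push_cast; linarith [tailSum_nonneg hνpos (k + 1)]
      rwa [div_le_iff₀' (hνpos _)] at this
    have h3 := prodSeq_pos hνpos k
    calc _ ≤ (tauSeq ν 1 ^ k * prodSeq ν k) * (tauSeq ν 1 * ν (k + 1)) :=
          mul_le_mul ih h2 (sigmaSeq_pos hνpos hnq _).le (by positivity)
      _ = _ := by ring

/-- `σ_{k+1} ⋯ σ_{k+m} ≤ τ_1^m (k+1) ⋯ (k+m) / τ_{k+m}^m`, because `τ` decreases. -/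
lemma descendant_growth (hνpos : ∀ k, 0 < ν k) (hνmono : Monotone ν)
    (hnq : Summable fun k => 1 / ν k) (k m : ℕ) :
    prodSeq (sigmaSeq ν) (k + m) * tauSeq ν (k + m) ^ m * k.factorial
      ≤ prodSeq (sigmaSeq ν) k * (k + m).factorial * tauSeq ν 1 ^ m := by
  have h1 := tauSeq_pos hνpos hnq 1
  suffices h : ∀ t : ℝ, 0 ≤ t → t ≤ tauSeq ν (k + m) →
      prodSeq (sigmaSeq ν) (k + m) * t ^ m * k.factorial
        ≤ prodSeq (sigmaSeq ν) k * (k + m).factorial * tauSeq ν 1 ^ m from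
    h _ (tauSeq_pos hνpos hnq _).le le_rfl
  induction m with
  | zero => intro t _ _; simp
  | succ m ih =>
    intro t ht ht2
    have h2 := ih t ht (ht2.trans (tauSeq_anti hνpos hνmono hnq (by omega)))
    have h3 := tauSeq_pos hνpos hnq (k + m + 1)
    have h4 : sigmaSeq ν (k + m + 1) * t ≤ tauSeq ν 1 * ((k + m : ℕ) + 1) := by
      rw [sigmaSeq_succ, div_mul_eq_mul_div, div_le_iff₀ h3]
      exact mul_le_mul_of_nonneg_left ht2 (by positivity)
    have h5 := prodSeq_pos (sigmaSeq_pos hνpos hnq) k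
    rw [← add_assoc, prodSeq_succ, pow_succ, pow_succ, Nat.factorial_succ]
    calc _ = (prodSeq (sigmaSeq ν) (k + m) * t ^ m * k.factorial)
          * (sigmaSeq ν (k + m + 1) * t) := by ring
      _ ≤ (prodSeq (sigmaSeq ν) k * (k + m).factorial * tauSeq ν 1 ^ m)
          * (tauSeq ν 1 * ((k + m : ℕ) + 1)) :=
        mul_le_mul h2 h4 (mul_nonneg (sigmaSeq_pos hνpos hnq _).le ht) (by positivity)
      _ = _ := by push_cast; ring

/-- At distances `D` that are small compared with `τ_q`, a Taylor term of order `q` of a jet of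
class `S`, differentiated `k` times, gains the factor `η^{q-k}`, up to `2^q`. -/
lemma descendant_small (hνpos : ∀ k, 0 < ν k) (hνmono : Monotone ν)
    (hnq : Summable fun k => 1 / ν k) {D η : ℝ} (hD : 0 ≤ D) {k q : ℕ} (hkq : k ≤ q)
    (h : tauSeq ν 1 * D ≤ η * tauSeq ν q) :
    prodSeq (sigmaSeq ν) q * D ^ (q - k) / (q - k).factorial
      ≤ 2 ^ q * η ^ (q - k) * prodSeq (sigmaSeq ν) k := by
  obtain ⟨m, rfl⟩ := Nat.exists_eq_add_of_le hkq
  rw [Nat.add_sub_cancel_left]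
  have h1 := tauSeq_pos hνpos hnq 1
  have h2 := tauSeq_pos hνpos hnq (k + m)
  have hη : 0 ≤ η := by
    by_contra hneg
    push Not at hneg
    nlinarith [mul_nonneg h1.le hD]
  have h3 := descendant_growth hνpos hνmono hnq k m
  have h4 : (tauSeq ν 1 * D) ^ m ≤ (η * tauSeq ν (k + m)) ^ m :=
    pow_le_pow_left₀ (by positivity) h _
  have h5 := prodSeq_pos (sigmaSeq_pos hνpos hnq) k
  have h6 := prodSeq_pos (sigmaSeq_pos hνpos hnq) (k + m)
  have h7 : ((k + m).factorial : ℝ) ≤ 2 ^ (k + m) * (k.factorial * m.factorial) := by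
    have := Nat.add_choose_mul_factorial_mul_factorial k m
    rw [← this]; push_cast
    rw [mul_assoc]
    have : (((k + m).choose m : ℕ) : ℝ) ≤ 2 ^ (k + m) := by
      exact_mod_cast Nat.choose_le_two_pow _ _
    gcongr
  rw [div_le_iff₀ (by positivity)]
  have h8 : (0 : ℝ) < tauSeq ν (k + m) ^ m * k.factorial * tauSeq ν 1 ^ m := by positivity
  refine le_of_mul_le_mul_right ?_ h8
  calc _ = (prodSeq (sigmaSeq ν) (k + m) * tauSeq ν (k + m) ^ m * k.factorial)
        * (tauSeq ν 1 * D) ^ m := by rw [mul_pow]; ring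
    _ ≤ (prodSeq (sigmaSeq ν) k * (k + m).factorial * tauSeq ν 1 ^ m)
        * (η * tauSeq ν (k + m)) ^ m := mul_le_mul h3 h4 (by positivity) (by positivity)
    _ ≤ (prodSeq (sigmaSeq ν) k * (2 ^ (k + m) * (k.factorial * m.factorial)) * tauSeq ν 1 ^ m)
        * (η * tauSeq ν (k + m)) ^ m := by gcongr
    _ = _ := by rw [mul_pow]; ring

end Weights

/-! ### Ultradifferentiable step functions on the line -/

section Step

/-- The averaging operator `g ↦ (2c)⁻¹ ∫_{t-c}^{t+c} g`. -/
noncomputable def avg (c : ℝ) (g : ℝ → ℝ) (t : ℝ) : ℝ := (2 * c)⁻¹ * ∫ s in (t - c)..(t + c), g s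

/-- The piecewise linear step, equal to `0` on `t ≤ -1/4` and to `1` on `t ≥ 1/4`. -/
noncomputable def clampStep (t : ℝ) : ℝ := max 0 (min 1 (2 * t + 1 / 2))

/-- `m` averages, of half-widths `a 0, …, a (m-1)`, of the piecewise linear step. -/
noncomputable def stepApprox : ℕ → (ℕ → ℝ) → ℝ → ℝ
  | 0, _ => clampStep
  | m + 1, a => avg (a 0) (stepApprox m fun i => a (i + 1))

/-- The infinite average `lim_m stepApprox m a`. -/
noncomputable def smoothStep (a : ℕ → ℝ) (t : ℝ) : ℝ := limUnder atTop fun m => stepApprox m a t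

lemma avg_sub_abs_le {c ε : ℝ} (hc : 0 < c) {g h : ℝ → ℝ} (hg : Continuous g) (hh : Continuous h)
    (t : ℝ) (H : ∀ s ∈ Set.Icc (t - c) (t + c), |g s - h s| ≤ ε) :
    |avg c g t - avg c h t| ≤ ε := by
  unfold avg
  rw [← mul_sub, ← intervalIntegral.integral_sub (hg.intervalIntegrable _ _)
    (hh.intervalIntegrable _ _), abs_mul, abs_of_pos (by positivity : (0:ℝ) < (2 * c)⁻¹),
    inv_mul_le_iff₀ (by positivity)]
  have := intervalIntegral.norm_integral_le_of_norm_le_const (a := t - c) (b := t + c)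
    (f := fun s => g s - h s) (C := ε) (fun s hs => by
      rw [Set.uIoc_of_le (by linarith)] at hs
      exact H s ⟨hs.1.le, hs.2⟩)
  rw [Real.norm_eq_abs] at this
  refine this.trans_eq ?_
  rw [show t + c - (t - c) = 2 * c by ring, abs_of_pos (by positivity)]
  ring

lemma avg_const {c : ℝ} (hc : 0 < c) (v t : ℝ) : avg c (fun _ => v) t = v := by
  unfold avg
  rw [intervalIntegral.integral_const, smul_eq_mul, show t + c - (t - c) = 2 * c by ring]
  field_simp

lemma avg_shift (c : ℝ) (g : ℝ → ℝ) (t d : ℝ) : avg c g (t + d) = avg c (fun s => g (s + d)) t := by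
  unfold avg
  rw [intervalIntegral.integral_comp_add_right (fun s => g s)]
  congr 2 <;> ring

/-- The properties of averaged steps that survive averaging: a `2`-Lipschitz step with values in
`[0,1]`, equal to `0` to the left of `-b` and to `1` to the right of `b`. -/
structure IsStep (b : ℝ) (g : ℝ → ℝ) : Prop where
  lip : ∀ s t, |g s - g t| ≤ 2 * |s - t|
  nonneg : ∀ t, 0 ≤ g t
  le_one : ∀ t, g t ≤ 1
  left : ∀ t, t ≤ -b → g t = 0
  right : ∀ t, b ≤ t → g t = 1

lemma IsStep.continuous {b : ℝ} {g : ℝ → ℝ} (h : IsStep b g) : Continuous g := by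
  have : LipschitzWith 2 g := LipschitzWith.of_dist_le_mul fun s t => by
    simpa [Real.dist_eq] using h.lip s t
  exact this.continuous

lemma avg_eq_of_eqOn {c : ℝ} (hc : 0 < c) {g : ℝ → ℝ} (hg : Continuous g) {v t : ℝ}
    (h : ∀ s ∈ Set.Icc (t - c) (t + c), g s = v) : avg c g t = v := by
  have := avg_sub_abs_le (ε := 0) hc hg (continuous_const (y := v)) t
    (fun s hs => by simp [h s hs])
  rw [avg_const hc] at this
  linarith [abs_nonpos_iff.1 this]

lemma IsStep.avg {b c : ℝ} (hc : 0 < c) {g : ℝ → ℝ} (h : IsStep b g) :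
    IsStep (b + c) (avg c g) where
  lip s t := by
    have e : s = t + (s - t) := by ring
    rw [e, avg_shift]
    refine avg_sub_abs_le hc ?_ h.continuous t fun r _ => ?_
    · exact h.continuous.comp (by fun_prop)
    · have := h.lip (r + (s - t)) r
      simpa using this
  nonneg t := by
    have h1 : 0 ≤ ∫ s in (t - c)..(t + c), g s :=
      intervalIntegral.integral_nonneg (by linarith) fun s _ => h.nonneg s
    unfold _root_.avg; positivity
  le_one t := by
    rw [← avg_const hc 1 t]
    unfold _root_.avg
    refine mul_le_mul_of_nonneg_left ?_ (by positivity)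
    exact intervalIntegral.integral_mono_on (by linarith) (h.continuous.intervalIntegrable _ _)
      (by simp) fun s _ => h.le_one s
  left t ht := avg_eq_of_eqOn hc h.continuous fun s hs => h.left s (by linarith [hs.2])
  right t ht := avg_eq_of_eqOn hc h.continuous fun s hs => h.right s (by linarith [hs.1])

lemma isStep_clamp : IsStep (1 / 4) clampStep where
  lip s t := by
    unfold clampStep
    have h1 := abs_max_sub_max_le_max 0 (min 1 (2 * s + 1 / 2)) 0 (min 1 (2 * t + 1 / 2))
    have h2 := abs_min_sub_min_le_max 1 (2 * s + 1 / 2) 1 (2 * t + 1 / 2)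
    simp only [sub_self, abs_zero] at h1 h2
    rw [max_eq_right (abs_nonneg (min 1 (2 * s + 1 / 2) - min 1 (2 * t + 1 / 2)))] at h1
    rw [max_eq_right (abs_nonneg (2 * s + 1 / 2 - (2 * t + 1 / 2)))] at h2
    refine (h1.trans h2).trans_eq ?_
    rw [show 2 * s + 1 / 2 - (2 * t + 1 / 2) = 2 * (s - t) by ring, abs_mul, abs_two]
  nonneg t := le_max_left _ _
  le_one t := max_le zero_le_one (min_le_left _ _)
  left t ht := by
    unfold clampStep
    exact max_eq_left ((min_le_right _ _).trans (by linarith))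
  right t ht := by
    unfold clampStep
    rw [min_eq_left (by linarith), max_eq_right zero_le_one]

lemma isStep_approx (m : ℕ) : ∀ a : ℕ → ℝ, (∀ i, 0 < a i) →
    IsStep (1 / 4 + ∑ i ∈ Finset.range m, a i) (stepApprox m a) := by
  induction m with
  | zero => intro a _; simpa [stepApprox] using isStep_clamp
  | succ m ih =>
    intro a ha
    have := (ih (fun i => a (i + 1)) fun i => ha _).avg (ha 0)
    rw [Finset.sum_range_succ', ← add_assoc]
    exact this

lemma stepApprox_succ_sub (m : ℕ) : ∀ a : ℕ → ℝ, (∀ i, 0 < a i) → ∀ t,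
    |stepApprox (m + 1) a t - stepApprox m a t| ≤ 2 * a m := by
  induction m with
  | zero =>
    intro a ha t
    change |avg (a 0) clampStep t - clampStep t| ≤ _
    rw [← avg_const (ha 0) (clampStep t) t]
    refine avg_sub_abs_le (ha 0) isStep_clamp.continuous continuous_const t fun s hs => ?_
    refine (isStep_clamp.lip s t).trans ?_
    have : |s - t| ≤ a 0 := abs_le.2 ⟨by linarith [hs.1], by linarith [hs.2]⟩
    linarith
  | succ m ih =>
    intro a ha t
    exact avg_sub_abs_le (ha 0) (isStep_approx (m + 1) _ fun i => ha _).continuous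
      (isStep_approx m _ fun i => ha _).continuous t fun s _ => ih _ (fun i => ha _) s

lemma tendsto_stepApprox {a : ℕ → ℝ} (ha : ∀ i, 0 < a i) (hs : Summable a) (t : ℝ) :
    Tendsto (fun m => stepApprox m a t) atTop (nhds (smoothStep a t)) := by
  refine CauchySeq.tendsto_limUnder (cauchySeq_of_dist_le_of_summable (fun i => 2 * a i)
    (fun m => ?_) (hs.mul_left 2))
  rw [dist_comm, Real.dist_eq]
  exact stepApprox_succ_sub m a ha t

lemma isStep_smooth {a : ℕ → ℝ} (ha : ∀ i, 0 < a i) (hs : Summable a) (h4 : ∑' i, a i ≤ 1 / 4) :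
    IsStep (1 / 2) (smoothStep a) := by
  have hT := tendsto_stepApprox ha hs
  have hb : ∀ m, 1 / 4 + ∑ i ∈ Finset.range m, a i ≤ 1 / 2 := fun m => by
    have := hs.sum_le_tsum (Finset.range m) fun i _ => (ha i).le
    linarith
  refine ⟨fun s t => ?_, fun t => ?_, fun t => ?_, fun t ht => ?_, fun t ht => ?_⟩
  · exact le_of_tendsto ((hT s).sub (hT t)).abs
      (Eventually.of_forall fun m => (isStep_approx m a ha).lip s t)
  · exact ge_of_tendsto (hT t) (Eventually.of_forall fun m => (isStep_approx m a ha).nonneg t)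
  · exact le_of_tendsto (hT t) (Eventually.of_forall fun m => (isStep_approx m a ha).le_one t)
  · refine tendsto_nhds_unique (hT t) (tendsto_const_nhds.congr fun m => ?_)
    exact ((isStep_approx m a ha).left t (by linarith [hb m])).symm
  · refine tendsto_nhds_unique (hT t) (tendsto_const_nhds.congr fun m => ?_)
    exact ((isStep_approx m a ha).right t (by linarith [hb m])).symm

lemma smoothStep_eq_avg {a : ℕ → ℝ} (ha : ∀ i, 0 < a i) (hs : Summable a) (t : ℝ) :
    smoothStep a t = avg (a 0) (smoothStep fun i => a (i + 1)) t := by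
  have hs' : Summable fun i => a (i + 1) := (summable_nat_add_iff 1).2 hs
  refine tendsto_nhds_unique ((tendsto_add_atTop_iff_nat 1).2 (tendsto_stepApprox ha hs t)) ?_
  change Tendsto (fun m => (2 * a 0)⁻¹ * ∫ s in (t - a 0)..(t + a 0),
    stepApprox m (fun i => a (i + 1)) s) atTop _
  refine Tendsto.const_mul _ ?_
  refine intervalIntegral.tendsto_integral_filter_of_dominated_convergence (fun _ => 1) ?_ ?_
    (by simp) ?_
  · exact Eventually.of_forall fun m =>
      (isStep_approx m _ fun i => ha _).continuous.aestronglyMeasurable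
  · refine Eventually.of_forall fun m => Eventually.of_forall fun s _ => ?_
    have := isStep_approx m (fun i => a (i + 1)) fun i => ha _
    rw [Real.norm_eq_abs, abs_of_nonneg (this.nonneg s)]
    exact this.le_one s
  · exact Eventually.of_forall fun s _ => tendsto_stepApprox (fun i => ha _) hs' s

lemma hasDerivAt_avg (c : ℝ) {g : ℝ → ℝ} (hg : Continuous g) (t : ℝ) :
    HasDerivAt (avg c g) ((2 * c)⁻¹ * (g (t + c) - g (t - c))) t := by
  have h1 : ∀ u, HasDerivAt (fun u => ∫ s in (0 : ℝ)..u, g s) (g u) u := fun u =>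
    intervalIntegral.integral_hasDerivAt_right (hg.intervalIntegrable _ _)
      (hg.stronglyMeasurableAtFilter _ _) hg.continuousAt
  have h2 : avg c g = fun t => (2 * c)⁻¹ *
      ((∫ s in (0 : ℝ)..(t + c), g s) - ∫ s in (0 : ℝ)..(t - c), g s) := by
    funext t
    unfold avg
    rw [← intervalIntegral.integral_interval_sub_left (hg.intervalIntegrable _ _)
      (hg.intervalIntegrable _ _)]
  rw [h2]
  exact (((h1 (t + c)).comp_add_const t c).sub ((h1 (t - c)).comp_sub_const t c)).const_mul _

lemma deriv_smoothStep {a : ℕ → ℝ} (ha : ∀ i, 0 < a i) (hs : Summable a)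
    (h4 : ∑' i, a i ≤ 1 / 4) (t : ℝ) :
    HasDerivAt (smoothStep a) ((2 * a 0)⁻¹ * (smoothStep (fun i => a (i + 1)) (t + a 0)
      - smoothStep (fun i => a (i + 1)) (t - a 0))) t := by
  have hs' : Summable fun i => a (i + 1) := (summable_nat_add_iff 1).2 hs
  have h4' : ∑' i, a (i + 1) ≤ 1 / 4 := by
    have := hs.tsum_eq_zero_add
    linarith [ha 0]
  have := hasDerivAt_avg (a 0) (isStep_smooth (fun i => ha _) hs' h4').continuous t
  rwa [← show smoothStep a = _ from funext (smoothStep_eq_avg ha hs)] at this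

/-- The `k`-th derivative of an infinite average is a `k`-fold difference quotient, with steps
`a 0, …, a (k-1)`, of the average over the remaining half-widths. -/
lemma smoothStep_bound (k : ℕ) : ∀ a : ℕ → ℝ, (∀ i, 0 < a i) → Summable a → ∑' i, a i ≤ 1 / 4 →
    ContDiff ℝ k (smoothStep a) ∧
      ∀ t, |iteratedDeriv k (smoothStep a) t| ≤ ∏ i ∈ Finset.range k, (a i)⁻¹ := by
  induction k with
  | zero =>
    intro a ha hs h4
    have h := isStep_smooth ha hs h4
    refine ⟨contDiff_zero.2 h.continuous, fun t => ?_⟩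
    simpa [abs_of_nonneg (h.nonneg t)] using h.le_one t
  | succ k ih =>
    intro a ha hs h4
    have hs' : Summable fun i => a (i + 1) := (summable_nat_add_iff 1).2 hs
    have h4' : ∑' i, a (i + 1) ≤ 1 / 4 := by
      have := hs.tsum_eq_zero_add
      linarith [ha 0]
    obtain ⟨hC, hB⟩ := ih _ (fun i => ha (i + 1)) hs' h4'
    set g := smoothStep fun i => a (i + 1) with hg
    have hd : deriv (smoothStep a) = fun t => (2 * a 0)⁻¹ * (g (t + a 0) - g (t - a 0)) :=
      funext fun t => (deriv_smoothStep ha hs h4 t).deriv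
    have hC1 : ContDiff ℝ k fun t => g (t + a 0) := hC.comp (by fun_prop)
    have hC2 : ContDiff ℝ k fun t => g (t - a 0) := hC.comp (by fun_prop)
    constructor
    · push_cast
      rw [contDiff_succ_iff_deriv]
      refine ⟨fun t => (deriv_smoothStep ha hs h4 t).differentiableAt, by simp, ?_⟩
      rw [hd]
      exact contDiff_const.mul (hC1.sub hC2)
    · intro t
      rw [iteratedDeriv_succ', hd, iteratedDeriv_const_mul _ (hC1.sub hC2).contDiffAt]
      have e : iteratedDeriv k (fun t => g (t + a 0) - g (t - a 0)) t
          = iteratedDeriv k g (t + a 0) - iteratedDeriv k g (t - a 0) := by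
        have := iteratedDeriv_sub (x := t) hC1.contDiffAt hC2.contDiffAt
        rw [iteratedDeriv_comp_add_const, iteratedDeriv_comp_sub_const] at this
        exact this
      have ha0 := ha 0
      rw [e, abs_mul, abs_of_pos (by positivity), Finset.prod_range_succ']
      have h1 := abs_sub (iteratedDeriv k g (t + a 0)) (iteratedDeriv k g (t - a 0))
      have h2 := hB (t + a 0)
      have h3 := hB (t - a 0)
      calc _ ≤ (2 * a 0)⁻¹ * (2 * ∏ i ∈ Finset.range k, (a (i + 1))⁻¹) := by
            gcongr; linarith
        _ = _ := by field_simp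

end Step

section Bump

variable {ν : ℕ → ℝ}

/-- The half-widths `1/ν_{max(i,p)}`, `i ≥ 1`, have sum at most `τ_p`. -/
lemma sum_inv_max (hνpos : ∀ k, 0 < ν k) (hnq : Summable fun k => 1 / ν k) {p : ℕ} (hp : 1 ≤ p) :
    (Summable fun i => 1 / ν (max (i + 1) p)) ∧ ∑' i, 1 / ν (max (i + 1) p) ≤ tauSeq ν p := by
  obtain ⟨q, rfl⟩ : ∃ q, p = q + 1 := ⟨p - 1, by omega⟩
  have e : (fun i => 1 / ν (max (i + q + 1) (q + 1))) = fun i => 1 / ν (i + (q + 1)) := by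
    funext i; rw [max_eq_left (by omega)]; rfl
  have hs : Summable fun i => 1 / ν (max (i + 1) (q + 1)) := by
    rw [← summable_nat_add_iff q, e]
    exact (summable_nat_add_iff (q + 1)).2 hnq
  refine ⟨hs, ?_⟩
  rw [← hs.sum_add_tsum_nat_add q, e]
  unfold tauSeq tailSum
  have : ∑ i ∈ Finset.range q, 1 / ν (max (i + 1) (q + 1)) = q * (1 / ν (q + 1)) := by
    rw [Finset.sum_congr rfl fun i hi => by
      rw [max_eq_right (by have := Finset.mem_range.1 hi; omega)]]
    simp
  rw [this]
  have h1 := one_div_pos.2 (hνpos (q + 1))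
  push_cast
  linarith [show ((q : ℝ) + 1) / ν (q + 1) = q * (1 / ν (q + 1)) + 1 / ν (q + 1) by ring]

/-- Replacing the first `p` factors of `N_k` by `ν_p` costs at most `ν_p^p/N_p ≤ H^p`. -/
lemma prod_max_le (hνpos : ∀ k, 0 < ν k) (hνmono : Monotone ν) {H : ℝ} {p : ℕ}
    (hp : ν p ^ p ≤ H ^ p * prodSeq ν p) (k : ℕ) :
    ∏ i ∈ Finset.range k, ν (max (i + 1) p) ≤ H ^ p * prodSeq ν k := by
  have hNp := prodSeq_pos hνpos p
  have key : ∀ k, k ≤ p → ν p ^ k * prodSeq ν p ≤ ν p ^ p * prodSeq ν k := by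
    intro k hk
    induction hk using Nat.decreasingInduction with
    | self => exact le_rfl
    | of_succ k hk ih =>
      rw [prodSeq_succ, pow_succ] at ih
      have h1 : ν (k + 1) ≤ ν p := hνmono hk
      have h2 := prodSeq_pos hνpos k
      have h3 := hνpos p
      have h4 : (ν p ^ k * prodSeq ν p) * ν p ≤ (ν p ^ p * prodSeq ν k) * ν p := by
        calc _ = ν p ^ k * ν p * prodSeq ν p := by ring
          _ ≤ ν p ^ p * (prodSeq ν k * ν (k + 1)) := ih
          _ ≤ ν p ^ p * (prodSeq ν k * ν p) := by gcongr
          _ = _ := by ring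
      exact le_of_mul_le_mul_right h4 h3
  have key2 : ∀ k, k ≤ p → ν p ^ k ≤ H ^ p * prodSeq ν k := by
    intro k hk
    have h1 := key k hk
    have h2 := prodSeq_pos hνpos k
    refine le_of_mul_le_mul_right (h1.trans ?_) hNp
    calc _ ≤ (H ^ p * prodSeq ν p) * prodSeq ν k := by gcongr
      _ = _ := by ring
  rcases le_total k p with h | h
  · rw [Finset.prod_congr rfl fun i hi => by
      rw [max_eq_right (by have := Finset.mem_range.1 hi; omega)]]
    simpa using key2 k h
  · induction k, h using Nat.le_induction with
    | base =>
      rw [Finset.prod_congr rfl fun i hi => by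
        rw [max_eq_right (by have := Finset.mem_range.1 hi; omega)]]
      simpa using key2 p le_rfl
    | succ k hk ih =>
      rw [Finset.prod_range_succ, prodSeq_succ, max_eq_left (by omega), ← mul_assoc]
      exact mul_le_mul_of_nonneg_right ih (hνpos _).le

/-- Integer translates of a bump of class `N` supported in `[-1,1]` form a partition of unity; the
parameter `p` trades a smaller rate `4τ_p` of the derivative bounds for a larger prefactor `2H^p`. -/
lemma exists_bump (hνpos : ∀ k, 0 < ν k) (hνmono : Monotone ν)
    (hnq : Summable fun k => 1 / ν k) {H : ℝ} {p : ℕ} (hp1 : 1 ≤ p)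
    (hp : ν p ^ p ≤ H ^ p * prodSeq ν p) :
    ∃ u : ℝ → ℝ, ContDiff ℝ (⊤ : ℕ∞) u ∧ (∀ t, 1 < |t| → u t = 0) ∧
      (∀ (M : ℕ) (t : ℝ), |t| ≤ M → ∑ m ∈ Finset.Icc (-M : ℤ) M, u (t - m) = 1) ∧
      ∀ (k : ℕ) t, |iteratedDeriv k u t| ≤ 2 * H ^ p * (4 * tauSeq ν p) ^ k * prodSeq ν k := by
  have hτ := tauSeq_pos hνpos hnq p
  obtain ⟨hs, hsum⟩ := sum_inv_max hνpos hnq hp1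
  set a : ℕ → ℝ := fun i => (4 * tauSeq ν p)⁻¹ * (1 / ν (max (i + 1) p)) with ha
  have hapos : ∀ i, 0 < a i := fun i => by have := hνpos (max (i + 1) p); positivity
  have hasum : Summable a := hs.mul_left _
  have ha4 : ∑' i, a i ≤ 1 / 4 := by
    rw [ha, tsum_mul_left, inv_mul_le_iff₀ (by positivity)]
    linarith
  have hst := isStep_smooth hapos hasum ha4
  set Ψ := smoothStep a with hΨ
  have hB : ∀ k t, |iteratedDeriv k Ψ t| ≤ H ^ p * (4 * tauSeq ν p) ^ k * prodSeq ν k := by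
    intro k t
    refine ((smoothStep_bound k a hapos hasum ha4).2 t).trans ?_
    have h1 : ∏ i ∈ Finset.range k, (a i)⁻¹
        = (4 * tauSeq ν p) ^ k * ∏ i ∈ Finset.range k, ν (max (i + 1) p) := by
      rw [← Finset.card_range k, ← Finset.prod_const, Finset.card_range,
        ← Finset.prod_mul_distrib]
      refine Finset.prod_congr rfl fun i _ => ?_
      rw [ha]; simp [mul_comm]
    rw [h1]
    have := prod_max_le hνpos hνmono hp k
    calc _ ≤ (4 * tauSeq ν p) ^ k * (H ^ p * prodSeq ν k) := by gcongr
      _ = _ := by ring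
  have hC : ContDiff ℝ (⊤ : ℕ∞) Ψ :=
    contDiff_infty.2 fun k => (smoothStep_bound k a hapos hasum ha4).1
  refine ⟨fun t => Ψ (t + 1 / 2) - Ψ (t - 1 / 2), ?_, ?_, ?_, ?_⟩
  · exact (hC.comp (by fun_prop)).sub (hC.comp (by fun_prop))
  · intro t ht
    rcases lt_abs.1 ht with h | h
    · simp only [hst.right (t + 1 / 2) (by linarith), hst.right (t - 1 / 2) (by linarith), sub_self]
    · simp only [hst.left (t + 1 / 2) (by linarith), hst.left (t - 1 / 2) (by linarith), sub_self]
  · intro M t ht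
    have tele : ∀ M : ℕ, ∑ m ∈ Finset.Icc (-M : ℤ) M, (Ψ (t - m + 1 / 2) - Ψ (t - m - 1 / 2))
        = Ψ (t + M + 1 / 2) - Ψ (t - M - 1 / 2) := by
      intro M
      induction M with
      | zero => simp
      | succ M ih =>
        have e : Finset.Icc (-((M + 1 : ℕ) : ℤ)) ((M + 1 : ℕ) : ℤ)
            = insert (-((M + 1 : ℕ) : ℤ)) (insert ((M + 1 : ℕ) : ℤ)
              (Finset.Icc (-(M : ℤ)) (M : ℤ))) := by
          ext x; simp only [Finset.mem_Icc, Finset.mem_insert]; omega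
        rw [e, Finset.sum_insert (by simp only [Finset.mem_Icc, Finset.mem_insert]; omega),
          Finset.sum_insert (by simp only [Finset.mem_Icc]; omega), ih]
        push_cast
        rw [show t - (-((M : ℝ) + 1)) - 1 / 2 = t + M + 1 / 2 by ring,
          show t - ((M : ℝ) + 1) + 1 / 2 = t - M - 1 / 2 by ring,
          show t - (-((M : ℝ) + 1)) + 1 / 2 = t + (M + 1) + 1 / 2 by ring]
        ring
    obtain ⟨h1, h2⟩ := abs_le.1 ht
    rw [tele, hst.right _ (by linarith), hst.left _ (by linarith), sub_zero]
  · intro k t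
    have hCk : ContDiff ℝ k Ψ := (smoothStep_bound k a hapos hasum ha4).1
    have hC1 : ContDiff ℝ k fun t => Ψ (t + 1 / 2) := hCk.comp (by fun_prop)
    have hC2 : ContDiff ℝ k fun t => Ψ (t - 1 / 2) := hCk.comp (by fun_prop)
    have := iteratedDeriv_sub (x := t) hC1.contDiffAt hC2.contDiffAt
    rw [iteratedDeriv_comp_add_const, iteratedDeriv_comp_sub_const] at this
    rw [show (fun t => Ψ (t + 1 / 2) - Ψ (t - 1 / 2))
      = (fun t => Ψ (t + 1 / 2)) - fun t => Ψ (t - 1 / 2) from rfl, this]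
    have h1 := abs_sub (iteratedDeriv k Ψ (t + 1 / 2)) (iteratedDeriv k Ψ (t - 1 / 2))
    have h2 := hB k (t + 1 / 2)
    have h3 := hB k (t - 1 / 2)
    linarith

end Bump

/-! ### Calculus of iterated partial derivatives -/

section Words

variable {n : ℕ}

/-- The iterated partial derivative `∂_{i_1} ⋯ ∂_{i_k} f` along a word `[i_1, …, i_k]`. -/
noncomputable def wordD (l : List (Fin n)) (f : EuclideanSpace ℝ (Fin n) → ℝ) :
    EuclideanSpace ℝ (Fin n) → ℝ :=
  l.foldr (fun i g => pderivE i g) f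

lemma wordD_nil (f : EuclideanSpace ℝ (Fin n) → ℝ) : wordD [] f = f := rfl

lemma wordD_cons (i : Fin n) (l : List (Fin n)) (f : EuclideanSpace ℝ (Fin n) → ℝ) :
    wordD (i :: l) f = pderivE i (wordD l f) := rfl

lemma wordD_append (l l' : List (Fin n)) (f : EuclideanSpace ℝ (Fin n) → ℝ) :
    wordD (l ++ l') f = wordD l (wordD l' f) := by
  simp [wordD, List.foldr_append]

lemma contDiff_pderivE {f : EuclideanSpace ℝ (Fin n) → ℝ} (hf : ContDiff ℝ (⊤ : ℕ∞) f)
    (i : Fin n) : ContDiff ℝ (⊤ : ℕ∞) (pderivE i f) :=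
  (hf.fderiv_right (m := (⊤ : ℕ∞)) (by simp)).clm_apply contDiff_const

lemma contDiff_wordD {f : EuclideanSpace ℝ (Fin n) → ℝ} (hf : ContDiff ℝ (⊤ : ℕ∞) f)
    (l : List (Fin n)) : ContDiff ℝ (⊤ : ℕ∞) (wordD l f) := by
  induction l with
  | nil => exact hf
  | cons i l ih => exact contDiff_pderivE ih i

lemma ContDiff.diffAt_top {f : EuclideanSpace ℝ (Fin n) → ℝ} (hf : ContDiff ℝ (⊤ : ℕ∞) f)
    (x : EuclideanSpace ℝ (Fin n)) : DifferentiableAt ℝ f x :=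
  (hf.differentiable (by simp)) x

lemma wordD_sum {ι : Type*} (s : Finset ι) {f : ι → EuclideanSpace ℝ (Fin n) → ℝ}
    (hf : ∀ j ∈ s, ContDiff ℝ (⊤ : ℕ∞) (f j)) (l : List (Fin n)) :
    wordD l (fun x => ∑ j ∈ s, f j x) = fun x => ∑ j ∈ s, wordD l (f j) x := by
  induction l with
  | nil => rfl
  | cons i l ih =>
    rw [wordD_cons, ih]
    funext x
    unfold pderivE
    rw [fderiv_fun_sum fun j hj => (contDiff_wordD (hf j hj) l).diffAt_top x]
    simp [wordD_cons, pderivE]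

lemma wordD_add {f g : EuclideanSpace ℝ (Fin n) → ℝ} (hf : ContDiff ℝ (⊤ : ℕ∞) f)
    (hg : ContDiff ℝ (⊤ : ℕ∞) g) (l : List (Fin n)) :
    wordD l (fun x => f x + g x) = fun x => wordD l f x + wordD l g x := by
  induction l with
  | nil => rfl
  | cons i l ih =>
    rw [wordD_cons, ih]
    funext x
    unfold pderivE
    rw [fderiv_fun_add ((contDiff_wordD hf l).diffAt_top x) ((contDiff_wordD hg l).diffAt_top x)]
    simp [wordD_cons, pderivE]

lemma wordD_mul_const {f : EuclideanSpace ℝ (Fin n) → ℝ} (hf : ContDiff ℝ (⊤ : ℕ∞) f) (c : ℝ)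
    (l : List (Fin n)) : wordD l (fun x => f x * c) = fun x => wordD l f x * c := by
  induction l with
  | nil => rfl
  | cons i l ih =>
    rw [wordD_cons, ih]
    funext x
    unfold pderivE
    rw [fderiv_mul_const ((contDiff_wordD hf l).diffAt_top x)]
    simp [wordD_cons, pderivE, mul_comm]

lemma wordD_sub {f g : EuclideanSpace ℝ (Fin n) → ℝ} (hf : ContDiff ℝ (⊤ : ℕ∞) f)
    (hg : ContDiff ℝ (⊤ : ℕ∞) g) (l : List (Fin n)) :
    wordD l (fun x => f x - g x) = fun x => wordD l f x - wordD l g x := by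
  have h := wordD_add hf (hg.mul contDiff_const : ContDiff ℝ (⊤ : ℕ∞) fun x => g x * (-1)) l
  rw [wordD_mul_const hg] at h
  simpa [sub_eq_add_neg] using h

lemma wordD_congr {f g : EuclideanSpace ℝ (Fin n) → ℝ} {x : EuclideanSpace ℝ (Fin n)}
    (h : f =ᶠ[nhds x] g) (l : List (Fin n)) : wordD l f =ᶠ[nhds x] wordD l g := by
  induction l with
  | nil => exact h
  | cons i l ih =>
    filter_upwards [ih.fderiv (𝕜 := ℝ)] with y hy
    simp [wordD_cons, pderivE, hy]

lemma wordD_const_zero (l : List (Fin n)) : wordD l (fun _ => (0 : ℝ)) = fun _ => 0 := by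
  simpa using wordD_mul_const (f := fun _ => (0 : ℝ)) contDiff_const 0 l

lemma pderivE_mul {f g : EuclideanSpace ℝ (Fin n) → ℝ} (hf : ContDiff ℝ (⊤ : ℕ∞) f)
    (hg : ContDiff ℝ (⊤ : ℕ∞) g) (i : Fin n) :
    pderivE i (fun x => f x * g x) = fun x => pderivE i f x * g x + f x * pderivE i g x := by
  funext x
  unfold pderivE
  rw [fderiv_fun_mul (hf.diffAt_top x) (hg.diffAt_top x)]
  simp; ring

/-- Leibniz: weighted bounds multiply. The offsets `s`, `t` carry the induction over words. -/
lemma wordD_mul_le_aux {M : ℕ → ℝ} (hM : ∀ j k, M j * M k ≤ M (j + k)) (hM0 : ∀ k, 0 ≤ M k)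
    {x : EuclideanSpace ℝ (Fin n)} {ρ₁ ρ₂ : ℝ} (hρ₁ : 0 ≤ ρ₁) (hρ₂ : 0 ≤ ρ₂) (l : List (Fin n)) :
    ∀ (f g : EuclideanSpace ℝ (Fin n) → ℝ) (A B : ℝ) (s t : ℕ), ContDiff ℝ (⊤ : ℕ∞) f →
      ContDiff ℝ (⊤ : ℕ∞) g → 0 ≤ A → 0 ≤ B →
      (∀ l, |wordD l f x| ≤ A * ρ₁ ^ l.length * M (l.length + s)) →
      (∀ l, |wordD l g x| ≤ B * ρ₂ ^ l.length * M (l.length + t)) →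
      |wordD l (fun y => f y * g y) x| ≤ A * B * (ρ₁ + ρ₂) ^ l.length * M (l.length + (s + t)) := by
  induction l using List.reverseRecOn with
  | nil =>
    intro f g A B s t _ _ hA hB h1 h2
    have h1 := h1 []
    have h2 := h2 []
    simp only [wordD_nil, List.length_nil, pow_zero, mul_one, zero_add] at *
    rw [abs_mul]
    calc |f x| * |g x| ≤ (A * M s) * (B * M t) :=
          mul_le_mul h1 h2 (abs_nonneg _) (mul_nonneg hA (hM0 _))
      _ = A * B * (M s * M t) := by ring
      _ ≤ _ := mul_le_mul_of_nonneg_left (hM _ _) (mul_nonneg hA hB)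
  | append_singleton l i ih =>
    intro f g A B s t hf hg hA hB h1 h2
    have hpf := contDiff_pderivE hf i
    have hpg := contDiff_pderivE hg i
    have e : wordD (l ++ [i]) (fun y => f y * g y) = fun x =>
        wordD l (fun y => pderivE i f y * g y) x + wordD l (fun y => f y * pderivE i g y) x := by
      rw [wordD_append, wordD_cons, wordD_nil, pderivE_mul hf hg, wordD_add (hpf.mul hg)
        (hf.mul hpg)]
    have k1 := ih (pderivE i f) g (A * ρ₁) B (s + 1) t hpf hg (by positivity) hB (fun l' => by
      have := h1 (l' ++ [i])
      rw [wordD_append, wordD_cons, wordD_nil, List.length_append, List.length_singleton] at this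
      refine this.trans_eq ?_
      rw [pow_succ, show l'.length + 1 + s = l'.length + (s + 1) by ring]; ring) h2
    have k2 := ih f (pderivE i g) A (B * ρ₂) s (t + 1) hf hpg hA (by positivity) h1 (fun l' => by
      have := h2 (l' ++ [i])
      rw [wordD_append, wordD_cons, wordD_nil, List.length_append, List.length_singleton] at this
      refine this.trans_eq ?_
      rw [pow_succ, show l'.length + 1 + t = l'.length + (t + 1) by ring]; ring)
    rw [e]
    refine (abs_add_le _ _).trans ((add_le_add k1 k2).trans_eq ?_)
    rw [List.length_append, List.length_singleton, pow_succ,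
      show l.length + (s + 1 + t) = l.length + 1 + (s + t) by ring,
      show l.length + (s + (t + 1)) = l.length + 1 + (s + t) by ring]
    ring

lemma wordD_mul_le {M : ℕ → ℝ} (hM : ∀ j k, M j * M k ≤ M (j + k)) (hM0 : ∀ k, 0 ≤ M k)
    {x : EuclideanSpace ℝ (Fin n)} {ρ₁ ρ₂ : ℝ} (hρ₁ : 0 ≤ ρ₁) (hρ₂ : 0 ≤ ρ₂)
    {f g : EuclideanSpace ℝ (Fin n) → ℝ} {A B : ℝ} (hf : ContDiff ℝ (⊤ : ℕ∞) f)
    (hg : ContDiff ℝ (⊤ : ℕ∞) g) (hA : 0 ≤ A) (hB : 0 ≤ B)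
    (h1 : ∀ l, |wordD l f x| ≤ A * ρ₁ ^ l.length * M l.length)
    (h2 : ∀ l, |wordD l g x| ≤ B * ρ₂ ^ l.length * M l.length) (l : List (Fin n)) :
    |wordD l (fun y => f y * g y) x| ≤ A * B * (ρ₁ + ρ₂) ^ l.length * M l.length :=
  wordD_mul_le_aux hM hM0 hρ₁ hρ₂ l f g A B 0 0 hf hg hA hB h1 h2

/-- Partial derivatives of a product of functions of one coordinate each. -/
lemma wordD_tensor {g : Fin n → ℝ → ℝ} (hg : ∀ i, ContDiff ℝ (⊤ : ℕ∞) (g i))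
    (l : List (Fin n)) :
    wordD l (fun x => ∏ i, g i (x i)) = fun x => ∏ i, iteratedDeriv (l.count i) (g i) (x i) := by
  induction l with
  | nil => simp [wordD_nil]
  | cons i l ih =>
    rw [wordD_cons, ih]
    funext x
    unfold pderivE
    have hd : ∀ j, HasFDerivAt (fun x : EuclideanSpace ℝ (Fin n) =>
        iteratedDeriv (l.count j) (g j) (x j))
        (iteratedDeriv (l.count j + 1) (g j) (x j) • (EuclideanSpace.proj j :
          EuclideanSpace ℝ (Fin n) →L[ℝ] ℝ)) x := by
      intro j
      have h1 : HasDerivAt (iteratedDeriv (l.count j) (g j))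
          (iteratedDeriv (l.count j + 1) (g j) (x j)) (x j) := by
        rw [iteratedDeriv_succ]
        exact (((hg j).differentiable_iteratedDeriv _ (by exact_mod_cast WithTop.coe_lt_top _))
          _).hasDerivAt
      exact h1.comp_hasFDerivAt x (EuclideanSpace.proj (𝕜 := ℝ) j).hasFDerivAt
    have hproj : ∀ j, (EuclideanSpace.proj j : EuclideanSpace ℝ (Fin n) →L[ℝ] ℝ)
        (EuclideanSpace.single i 1) = if j = i then 1 else 0 := fun j => by
      simp
    rw [(HasFDerivAt.finsetProd fun j _ => hd j).fderiv]
    simp only [sum_apply, smul_apply, smul_eq_mul, hproj]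
    rw [Finset.sum_eq_single i (fun j _ hj => by simp [hj]) (by simp)]
    rw [← Finset.mul_prod_erase _ _ (Finset.mem_univ i), mul_comm]
    simp only [if_true, mul_one, List.count_cons_self]
    congr 1
    refine Finset.prod_congr rfl fun j hj => ?_
    rw [List.count_cons_of_ne (Finset.ne_of_mem_erase hj).symm]

/-- The sorted word in which the letter `i` occurs `β i` times. -/
def sortedWord (β : Fin n → ℕ) : List (Fin n) :=
  (List.finRange n).flatMap fun i => List.replicate (β i) i

lemma pderivMulti_eq_wordD (β : Fin n → ℕ) (f : EuclideanSpace ℝ (Fin n) → ℝ) :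
    pderivMulti β f = wordD (sortedWord β) f := by
  unfold pderivMulti sortedWord
  induction List.finRange n with
  | nil => rfl
  | cons i L ih =>
    rw [List.foldr_cons, ih, List.flatMap_cons, wordD_append]
    generalize wordD (List.flatMap (fun i => List.replicate (β i) i) L) f = g
    induction β i with
    | zero => rfl
    | succ k ih2 => rw [Function.iterate_succ_apply', ih2, List.replicate_succ, wordD_cons]

lemma length_sortedWord (β : Fin n → ℕ) : (sortedWord β).length = ∑ i, β i := by
  simp [sortedWord, List.length_flatMap, Fin.sum_univ_def]

lemma count_sortedWord (β : Fin n → ℕ) (i : Fin n) : (sortedWord β).count i = β i := by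
  have h : ∀ L : List (Fin n), (L.flatMap fun i => List.replicate (β i) i).count i
      = L.count i * β i := by
    intro L
    induction L with
    | nil => simp
    | cons j L ih =>
      rw [List.flatMap_cons, List.count_append, ih, List.count_replicate, List.count_cons]
      by_cases hj : j = i
      · subst hj; simp; ring
      · simp [hj]
  rw [sortedWord, h, List.count_eq_one_of_mem (List.nodup_finRange n) (List.mem_finRange i),
    one_mul]

lemma sum_count (l : List (Fin n)) : ∑ i, l.count i = l.length := by
  induction l with
  | nil => simp
  | cons i l ih => simp [List.count_cons, Finset.sum_add_distrib, ih]

lemma wordD_eq_iteratedFDeriv {f : EuclideanSpace ℝ (Fin n) → ℝ} (hf : ContDiff ℝ (⊤ : ℕ∞) f)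
    (l : List (Fin n)) (x : EuclideanSpace ℝ (Fin n)) :
    wordD l f x = iteratedFDeriv ℝ l.length f x fun j => EuclideanSpace.single (l.get j) 1 := by
  induction l generalizing x with
  | nil => simp [wordD_nil]
  | cons i l ih =>
    rw [wordD_cons, show wordD l f = _ from funext ih]
    unfold pderivE
    have hd : DifferentiableAt ℝ (iteratedFDeriv ℝ l.length f) x :=
      (hf.differentiable_iteratedFDeriv (by exact_mod_cast WithTop.coe_lt_top _)) x
    rw [fderiv_continuousMultilinear_apply_const hd]
    simp only [List.length_cons]
    rw [iteratedFDeriv_succ_apply_left]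
    rfl

lemma norm_iteratedFDeriv_le_of_wordD {f : EuclideanSpace ℝ (Fin n) → ℝ}
    (hf : ContDiff ℝ (⊤ : ℕ∞) f) (k : ℕ) {x : EuclideanSpace ℝ (Fin n)} {B : ℝ}
    (h : ∀ l : List (Fin n), l.length = k → |wordD l f x| ≤ B) (hB : 0 ≤ B) :
    ‖iteratedFDeriv ℝ k f x‖ ≤ (n : ℝ) ^ k * B := by
  refine ContinuousMultilinearMap.opNorm_le_bound (by positivity) fun m => ?_
  have e : ∀ j, m j = ∑ i, m j i • EuclideanSpace.single i (1 : ℝ) := fun j => by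
    ext i; simp [Pi.single_apply]
  conv_lhs => rw [show m = fun j => ∑ i, m j i • EuclideanSpace.single i (1 : ℝ) from funext e]
  rw [ContinuousMultilinearMap.map_sum]
  refine (norm_sum_le _ _).trans ?_
  have : ∀ r : Fin k → Fin n, ‖iteratedFDeriv ℝ k f x fun j =>
      m j (r j) • EuclideanSpace.single (r j) (1 : ℝ)‖ ≤ B * ∏ j, ‖m j‖ := by
    intro r
    rw [ContinuousMultilinearMap.map_smul_univ, norm_smul, norm_prod, mul_comm]
    refine mul_le_mul ?_ (Finset.prod_le_prod (fun _ _ => norm_nonneg _) fun j _ =>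
      PiLp.norm_apply_le _ _) (Finset.prod_nonneg fun _ _ => norm_nonneg _) hB
    have h1 := h (List.ofFn r) (by simp)
    rw [wordD_eq_iteratedFDeriv hf] at h1
    have h2 : ∀ (k' : ℕ) (hk : k' = k) (v : Fin k' → EuclideanSpace ℝ (Fin n)),
        iteratedFDeriv ℝ k' f x v = iteratedFDeriv ℝ k f x fun j => v (Fin.cast hk.symm j) := by
      rintro _ rfl v; rfl
    rw [h2 _ (by simp)] at h1
    simpa using h1
  refine (Finset.sum_le_sum fun r _ => this r).trans_eq ?_
  simp; ring

/-- A series of smooth functions may be differentiated along words when all derivatives have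
summable uniform bounds. -/
lemma wordD_tsum {h : ℕ → EuclideanSpace ℝ (Fin n) → ℝ} (hh : ∀ p, ContDiff ℝ (⊤ : ℕ∞) (h p))
    {v : ℕ → ℕ → ℝ} (hv : ∀ k, Summable (v k))
    (hb : ∀ p l x, |wordD l (h p) x| ≤ v l.length p) :
    ContDiff ℝ (⊤ : ℕ∞) (fun x => ∑' p, h p x) ∧
      ∀ l x, HasSum (fun p => wordD l (h p) x) (wordD l (fun x => ∑' p, h p x) x) := by
  have hb' : ∀ k p x, ‖iteratedFDeriv ℝ k (h p) x‖ ≤ (n : ℝ) ^ k * |v k p| := fun k p x =>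
    norm_iteratedFDeriv_le_of_wordD (hh p) k
      (fun l hl => by subst hl; exact (hb p l x).trans (le_abs_self _)) (abs_nonneg _)
  have hv' : ∀ k, Summable fun p => (n : ℝ) ^ k * |v k p| := fun k => (hv k).abs.mul_left _
  have hC : ContDiff ℝ (⊤ : ℕ∞) (fun x => ∑' p, h p x) :=
    contDiff_tsum hh (fun k _ => hv' k) fun k p x _ => hb' k p x
  refine ⟨hC, fun l x => ?_⟩
  rw [wordD_eq_iteratedFDeriv hC, iteratedFDeriv_tsum hh (fun k _ => hv' k)
    (fun k p x _ => hb' k p x) (by exact_mod_cast le_top)]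
  have hs : Summable fun p => iteratedFDeriv ℝ l.length (h p) x :=
    Summable.of_norm_bounded (hv' l.length) fun p => hb' _ p x
  have := (ContinuousMultilinearMap.apply ℝ (fun _ : Fin l.length => EuclideanSpace ℝ (Fin n)) ℝ
    fun j => EuclideanSpace.single (l.get j) 1).hasSum hs.hasSum
  rw [show (fun p => wordD l (h p) x) = _ from
    funext fun p => wordD_eq_iteratedFDeriv (hh p) l x]
  exact this

end Words

/-! ### Taylor polynomials -/

section Taylor

variable {n : ℕ}

lemma iteratedDeriv_monomial (c : ℝ) (k m : ℕ) (t : ℝ) :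
    iteratedDeriv k (fun t : ℝ => (t - c) ^ m / (m.factorial : ℝ)) t
      = if k ≤ m then (t - c) ^ (m - k) / ((m - k).factorial : ℝ) else 0 := by
  induction k generalizing m with
  | zero => simp
  | succ k ih =>
    rw [iteratedDeriv_succ']
    cases m with
    | zero =>
      have : deriv (fun t : ℝ => (t - c) ^ 0 / ((0 : ℕ).factorial : ℝ)) = fun _ => 0 := by
        funext s; simp
      rw [this]; simp
    | succ m =>
      have : deriv (fun t : ℝ => (t - c) ^ (m + 1) / ((m + 1).factorial : ℝ))
          = fun t => (t - c) ^ m / (m.factorial : ℝ) := by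
        funext s
        have h := ((((hasDerivAt_id s).sub_const c).pow (m + 1)).div_const
          ((m + 1).factorial : ℝ)).deriv
        simp only [id] at h
        refine Eq.trans ?_ (h.trans ?_)
        · rfl
        · rw [Nat.factorial_succ]; push_cast
          have : ((m : ℝ) + 1) ≠ 0 := by positivity
          field_simp
      rw [this, ih]
      simp

/-- The polynomial `∑_{|γ| ≤ q} V_γ (x-a)^γ/γ!`. -/
noncomputable def polyAt (a : EuclideanSpace ℝ (Fin n)) (V : (Fin n → ℕ) → ℝ) (q : ℕ)
    (x : EuclideanSpace ℝ (Fin n)) : ℝ :=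
  ∑ γ ∈ midx n q, (∏ i, (x i - a i) ^ (γ i) / (Nat.factorial (γ i) : ℝ)) * V γ

lemma Tpoly_eq (F : (Fin n → ℕ) → EuclideanSpace ℝ (Fin n) → ℝ)
    (a : EuclideanSpace ℝ (Fin n)) (p : ℕ) : Tpoly F a p = polyAt a (fun γ => F γ a) p := rfl

lemma mem_midx {p : ℕ} {α : Fin n → ℕ} : α ∈ midx n p ↔ ∑ i, α i ≤ p := by
  unfold midx
  simp only [Finset.mem_filter, Fintype.mem_piFinset, Finset.mem_range, and_iff_right_iff_imp]
  intro h i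
  have := Finset.single_le_sum (f := α) (fun _ _ => Nat.zero_le _) (Finset.mem_univ i)
  omega

lemma card_midx_le (p : ℕ) : ((midx n p).card : ℝ) ≤ (2 ^ n) ^ p := by
  have h1 : (midx n p).card ≤ (p + 1) ^ n := by
    refine (Finset.card_filter_le _ _).trans ?_
    simp
  have h2 : (p + 1) ^ n ≤ (2 ^ n) ^ p := by
    rw [← pow_mul, mul_comm n p, pow_mul]
    exact Nat.pow_le_pow_left Nat.lt_two_pow_self _
  exact_mod_cast h1.trans h2

lemma contDiff_monomial (a : EuclideanSpace ℝ (Fin n)) (γ : Fin n → ℕ) :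
    ContDiff ℝ (⊤ : ℕ∞) fun x : EuclideanSpace ℝ (Fin n) =>
      ∏ i, (x i - a i) ^ (γ i) / (Nat.factorial (γ i) : ℝ) := by
  refine contDiff_prod fun i _ => ?_
  have : ContDiff ℝ (⊤ : ℕ∞) fun x : EuclideanSpace ℝ (Fin n) => x i :=
    (EuclideanSpace.proj (𝕜 := ℝ) i).contDiff
  exact ((this.sub contDiff_const).pow _).div_const _

lemma contDiff_polyAt (a : EuclideanSpace ℝ (Fin n)) (V : (Fin n → ℕ) → ℝ) (q : ℕ) :
    ContDiff ℝ (⊤ : ℕ∞) (polyAt a V q) :=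
  ContDiff.sum fun γ _ => (contDiff_monomial a γ).mul contDiff_const

lemma wordD_monomial (a : EuclideanSpace ℝ (Fin n)) (γ : Fin n → ℕ) (l : List (Fin n))
    (x : EuclideanSpace ℝ (Fin n)) :
    wordD l (fun x => ∏ i, (x i - a i) ^ (γ i) / (Nat.factorial (γ i) : ℝ)) x
      = ∏ i, if l.count i ≤ γ i then
          (x i - a i) ^ (γ i - l.count i) / ((γ i - l.count i).factorial : ℝ) else 0 := by
  have hg : ∀ i, ContDiff ℝ (⊤ : ℕ∞) fun t : ℝ => (t - a i) ^ (γ i) / (Nat.factorial (γ i) : ℝ) :=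
    fun i => ((contDiff_id.sub contDiff_const).pow _).div_const _
  rw [wordD_tensor hg]
  exact Finset.prod_congr rfl fun i _ => iteratedDeriv_monomial _ _ _ _

lemma wordD_polyAt (a : EuclideanSpace ℝ (Fin n)) (V : (Fin n → ℕ) → ℝ) (q : ℕ)
    (l : List (Fin n)) (x : EuclideanSpace ℝ (Fin n)) :
    wordD l (polyAt a V q) x
      = ∑ γ ∈ midx n q, (∏ i, if l.count i ≤ γ i then
          (x i - a i) ^ (γ i - l.count i) / ((γ i - l.count i).factorial : ℝ) else 0) * V γ := by
  unfold polyAt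
  rw [wordD_sum _ fun γ _ => (contDiff_monomial a γ).mul contDiff_const]
  refine Finset.sum_congr rfl fun γ _ => ?_
  rw [wordD_mul_const (contDiff_monomial a γ)]
  beta_reduce
  rw [wordD_monomial]

/-- The derivatives of a polynomial at its centre are its coefficients. -/
lemma wordD_polyAt_self (a : EuclideanSpace ℝ (Fin n)) (V : (Fin n → ℕ) → ℝ) {q : ℕ}
    {l : List (Fin n)} (hl : l.length ≤ q) :
    wordD l (polyAt a V q) a = V fun i => l.count i := by
  rw [wordD_polyAt, Finset.sum_eq_single (fun i => l.count i)]
  · simp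
  · intro γ _ hγ
    obtain ⟨i, hi⟩ := Function.ne_iff.1 hγ
    rw [Finset.prod_eq_zero (Finset.mem_univ i), zero_mul]
    split_ifs with h
    · rw [sub_self, zero_pow (by omega), zero_div]
    · rfl
  · intro h
    exact absurd (mem_midx.2 ((sum_count l).trans_le hl)) h

lemma factorial_add_le (a b : ℕ) :
    ((a + b).factorial : ℝ) ≤ 2 ^ (a + b) * (a.factorial * b.factorial) := by
  have h := Nat.add_choose_mul_factorial_mul_factorial a b
  have h2 : (a + b).choose a ≤ 2 ^ (a + b) := Nat.choose_le_two_pow _ _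
  have h3 : (a + b).choose b ≤ 2 ^ (a + b) := Nat.choose_le_two_pow _ _
  have : (a + b).factorial ≤ 2 ^ (a + b) * (a.factorial * b.factorial) := by
    rw [← h, mul_assoc]
    gcongr
  exact_mod_cast this

lemma factorial_sum_le (s : Finset (Fin n)) (δ : Fin n → ℕ) :
    ((∑ i ∈ s, δ i).factorial : ℝ) ≤ (2 ^ s.card) ^ (∑ i ∈ s, δ i) * ∏ i ∈ s, ((δ i).factorial : ℝ) := by
  induction s using Finset.induction_on with
  | empty => simp
  | insert a s ha ih =>
    rw [Finset.sum_insert ha, Finset.prod_insert ha, Finset.card_insert_of_notMem ha]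
    have h1 : ((2 : ℝ) ^ s.card) ^ (∑ i ∈ s, δ i) ≤ (2 ^ s.card) ^ (δ a + ∑ i ∈ s, δ i) :=
      pow_le_pow_right₀ (one_le_pow₀ (by norm_num)) (by omega)
    calc _ ≤ 2 ^ (δ a + ∑ i ∈ s, δ i) * (((δ a).factorial : ℝ) * (∑ i ∈ s, δ i).factorial) :=
          factorial_add_le _ _
      _ ≤ 2 ^ (δ a + ∑ i ∈ s, δ i) * (((δ a).factorial : ℝ) *
          ((2 ^ s.card) ^ (δ a + ∑ i ∈ s, δ i) * ∏ i ∈ s, ((δ i).factorial : ℝ))) := by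
        gcongr
        exact ih.trans (by gcongr)
      _ = _ := by rw [pow_succ (2 : ℝ) s.card, mul_pow]; ring

lemma abs_monomial_le {a x : EuclideanSpace ℝ (Fin n)} {D : ℝ} (hx : ∀ i, |x i - a i| ≤ D)
    (γ : Fin n → ℕ) (l : List (Fin n)) :
    |∏ i, if l.count i ≤ γ i then
          (x i - a i) ^ (γ i - l.count i) / ((γ i - l.count i).factorial : ℝ) else 0|
      ≤ if l.length ≤ ∑ i, γ i then (2 ^ n) ^ (∑ i, γ i - l.length) *
          (D ^ (∑ i, γ i - l.length) / ((∑ i, γ i - l.length).factorial : ℝ)) else 0 := by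
  by_cases h : ∀ i, l.count i ≤ γ i
  · have hs : ∑ i, (γ i - l.count i) = ∑ i, γ i - l.length := by
      rw [← sum_count l, Finset.sum_tsub_distrib _ fun i _ => h i]
    have hle : l.length ≤ ∑ i, γ i := by
      rw [← sum_count l]; exact Finset.sum_le_sum fun i _ => h i
    rw [if_pos hle, ← hs, Finset.abs_prod]
    have h1 : ∀ i, |if l.count i ≤ γ i then
          (x i - a i) ^ (γ i - l.count i) / ((γ i - l.count i).factorial : ℝ) else 0|
        ≤ D ^ (γ i - l.count i) / ((γ i - l.count i).factorial : ℝ) := by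
      intro i
      rw [if_pos (h i), abs_div, abs_pow, abs_of_nonneg (Nat.cast_nonneg (α := ℝ) _)]
      have := hx i
      gcongr
    refine (Finset.prod_le_prod (fun _ _ => abs_nonneg _) fun i _ => h1 i).trans ?_
    rw [Finset.prod_div_distrib, Finset.prod_pow_eq_pow_sum]
    have h2 := factorial_sum_le Finset.univ fun i => γ i - l.count i
    rw [Finset.card_univ, Fintype.card_fin] at h2
    have h3 : 0 ≤ D ^ (∑ i, (γ i - l.count i)) := by
      rw [← Finset.prod_pow_eq_pow_sum]
      exact Finset.prod_nonneg fun i _ => pow_nonneg ((abs_nonneg _).trans (hx i)) _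
    have h4 : (0 : ℝ) < ∏ i, ((γ i - l.count i).factorial : ℝ) :=
      Finset.prod_pos fun i _ => by positivity
    rw [← mul_div_assoc, div_le_div_iff₀ h4 (by positivity)]
    calc _ ≤ D ^ (∑ i, (γ i - l.count i)) * ((2 ^ n) ^ (∑ i, (γ i - l.count i)) *
          ∏ i, ((γ i - l.count i).factorial : ℝ)) := by gcongr
      _ = _ := by ring
  · push Not at h
    obtain ⟨i, hi⟩ := h
    rw [Finset.prod_eq_zero (Finset.mem_univ i) (if_neg (by omega)), abs_zero]
    split_ifs with hc
    · have hD : 0 ≤ D := (abs_nonneg _).trans (hx i)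
      positivity
    · exact le_rfl

/-- A polynomial of degree `q` whose coefficients satisfy Whitney's remainder estimates at
distance `D` is small near its centre in the class `N`, when `τ_1 D ≤ η τ_q`. -/
lemma wordD_polyAt_le {ν : ℕ → ℝ} (hνpos : ∀ k, 0 < ν k) (hνmono : Monotone ν) (hν0 : ν 0 = 1)
    (hnq : Summable fun k => 1 / ν k) {a x : EuclideanSpace ℝ (Fin n)} {D η C : ℝ}
    (hD : 0 ≤ D) (hη : 0 < η) (hC : 0 ≤ C) {q : ℕ} (h : tauSeq ν 1 * D ≤ η * tauSeq ν q)
    (hx : ∀ i, |x i - a i| ≤ D) {V : (Fin n → ℕ) → ℝ}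
    (hV : ∀ γ : Fin n → ℕ, ∑ i, γ i ≤ q → |V γ| ≤ C * prodSeq (sigmaSeq ν) q *
      D ^ (q - ∑ i, γ i) / ((q - ∑ i, γ i).factorial : ℝ)) (l : List (Fin n)) :
    |wordD l (polyAt a V q) x|
      ≤ C * (4 ^ (n + 1) * η) ^ q * (tauSeq ν 1 / η) ^ l.length * prodSeq ν l.length := by
  have h1 := tauSeq_pos hνpos hnq 1
  have hN := prodSeq_pos hνpos l.length
  have hS := prodSeq_pos (sigmaSeq_pos hνpos hnq)
  rw [wordD_polyAt]
  refine (Finset.abs_sum_le_sum_abs _ _).trans ?_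
  by_cases hl : l.length ≤ q
  · have hterm : ∀ γ ∈ midx n q, |(∏ i, if l.count i ≤ γ i then
          (x i - a i) ^ (γ i - l.count i) / ((γ i - l.count i).factorial : ℝ) else 0) * V γ|
        ≤ C * (2 ^ n) ^ q * 2 ^ q *
          (prodSeq (sigmaSeq ν) q * D ^ (q - l.length) / (q - l.length).factorial) := by
      intro γ hγ
      rw [mem_midx] at hγ
      rw [abs_mul]
      have hm := abs_monomial_le hx γ l
      split_ifs at hm with hc
      · obtain ⟨b, hb⟩ := Nat.exists_eq_add_of_le hc
        obtain ⟨c, hcq⟩ := Nat.exists_eq_add_of_le hγ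
        have hVγ := hV γ hγ
        rw [hb, Nat.add_sub_cancel_left] at hm
        rw [hcq, Nat.add_sub_cancel_left, ← hcq] at hVγ
        rw [show q - l.length = b + c by omega]
        have hf := factorial_add_le b c
        have h2 : (2 : ℝ) ^ (b + c) ≤ 2 ^ q := pow_le_pow_right₀ (by norm_num) (by omega)
        have h3 : ((2 : ℝ) ^ n) ^ b ≤ (2 ^ n) ^ q :=
          pow_le_pow_right₀ (one_le_pow₀ (by norm_num)) (by omega)
        have hSq := hS q
        have hfr : 1 / ((b.factorial : ℝ) * c.factorial) ≤ 2 ^ q / (b + c).factorial := by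
          rw [div_le_div_iff₀ (by positivity) (by positivity), one_mul]
          exact hf.trans (by gcongr)
        calc _ ≤ ((2 ^ n) ^ b * (D ^ b / (b.factorial : ℝ))) *
              (C * prodSeq (sigmaSeq ν) q * D ^ c / (c.factorial : ℝ)) :=
              mul_le_mul hm hVγ (abs_nonneg _) (by positivity)
          _ = C * (2 ^ n) ^ b * (prodSeq (sigmaSeq ν) q * D ^ (b + c)) *
              (1 / (b.factorial * c.factorial)) := by rw [pow_add]; field_simp
          _ ≤ C * (2 ^ n) ^ q * (prodSeq (sigmaSeq ν) q * D ^ (b + c)) *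
              (2 ^ q / (b + c).factorial) := by
            refine mul_le_mul ?_ hfr (by positivity) (by positivity)
            gcongr
          _ = _ := by ring
      · rw [abs_nonpos_iff.1 hm, abs_zero, zero_mul]
        have := hS q
        positivity
    refine (Finset.sum_le_sum hterm).trans ?_
    rw [Finset.sum_const, nsmul_eq_mul]
    have hsm := descendant_small hνpos hνmono hnq hD hl h
    have hSN := descendant_le hνpos hν0 hnq l.length
    have hSq := hS q
    have hSl := hS l.length
    calc _ ≤ (2 ^ n) ^ q * (C * (2 ^ n) ^ q * 2 ^ q *
          (2 ^ q * η ^ (q - l.length) * (tauSeq ν 1 ^ l.length * prodSeq ν l.length))) := by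
          have := card_midx_le (n := n) q
          gcongr
          exact hsm.trans (by gcongr)
      _ = _ := by
        rw [div_pow, pow_sub₀ _ hη.ne' hl, mul_pow (4 ^ (n + 1)), pow_succ (4 : ℝ) n,
          show (4 : ℝ) ^ n = 2 ^ n * 2 ^ n by rw [← mul_pow]; norm_num,
          show ((2 : ℝ) ^ n * 2 ^ n * 4) ^ q = (2 ^ n) ^ q * (2 ^ n) ^ q * (2 ^ q * 2 ^ q) by
            rw [mul_pow, mul_pow, ← mul_pow 2 2 q]; norm_num]
        field_simp
  · have : ∀ γ ∈ midx n q, |(∏ i, if l.count i ≤ γ i then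
          (x i - a i) ^ (γ i - l.count i) / ((γ i - l.count i).factorial : ℝ) else 0) * V γ| = 0 := by
      intro γ hγ
      rw [mem_midx] at hγ
      have hm := abs_monomial_le hx γ l
      rw [if_neg (by omega)] at hm
      rw [abs_mul, le_antisymm hm (abs_nonneg _), zero_mul]
    rw [Finset.sum_eq_zero this]
    positivity

lemma binom_factorial (u v : ℝ) (m : ℕ) :
    (u + v) ^ m / (m.factorial : ℝ) = ∑ j ∈ Finset.range (m + 1),
      u ^ j / (j.factorial : ℝ) * (v ^ (m - j) / ((m - j).factorial : ℝ)) := by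
  rw [add_pow, Finset.sum_div]
  refine Finset.sum_congr rfl fun j hj => ?_
  have hj : j ≤ m := by have := Finset.mem_range.1 hj; omega
  have h := Nat.choose_mul_factorial_mul_factorial hj
  rw [← h]
  have : (0 : ℝ) < m.choose j := by exact_mod_cast Nat.choose_pos hj
  push_cast
  field_simp

/-- Re-expansion of a Taylor polynomial at another base point. -/
lemma Tpoly_recenter (F : (Fin n → ℕ) → EuclideanSpace ℝ (Fin n) → ℝ)
    (a b : EuclideanSpace ℝ (Fin n)) (p : ℕ) (x : EuclideanSpace ℝ (Fin n)) :
    Tpoly F a p x = polyAt b (fun γ => ∑ β ∈ midx n (p - ∑ i, γ i),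
      (∏ i, (b i - a i) ^ (β i) / (Nat.factorial (β i) : ℝ)) * F (γ + β) a) p x := by
  unfold Tpoly polyAt
  have h1 : ∀ α : Fin n → ℕ, (∏ i, (x i - a i) ^ (α i) / (Nat.factorial (α i) : ℝ)) * F α a
      = ∑ γ ∈ Fintype.piFinset fun i => Finset.range (α i + 1),
        (∏ i, (x i - b i) ^ (γ i) / (Nat.factorial (γ i) : ℝ)) *
          ((∏ i, (b i - a i) ^ (α i - γ i) / (Nat.factorial (α i - γ i) : ℝ)) * F α a) := by
    intro α
    rw [Finset.prod_congr rfl fun i _ => by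
      rw [show x i - a i = (x i - b i) + (b i - a i) by ring, binom_factorial],
      Finset.prod_univ_sum, Finset.sum_mul]
    refine Finset.sum_congr rfl fun γ _ => ?_
    rw [Finset.prod_mul_distrib, mul_assoc]
  simp_rw [h1, Finset.mul_sum]
  rw [Finset.sum_sigma', Finset.sum_sigma']
  refine Finset.sum_bij' (fun q _ => ⟨q.2, q.1 - q.2⟩) (fun q _ => ⟨q.1 + q.2, q.1⟩) ?_ ?_ ?_ ?_ ?_
  · rintro ⟨α, γ⟩ h
    simp only [Finset.mem_sigma, mem_midx, Fintype.mem_piFinset, Finset.mem_range] at h ⊢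
    have h2 : ∀ i, γ i ≤ α i := fun i => by have := h.2 i; omega
    have h3 : ∑ i, γ i ≤ ∑ i, α i := Finset.sum_le_sum fun i _ => h2 i
    have h4 : ∑ i, (α - γ) i = ∑ i, α i - ∑ i, γ i :=
      Finset.sum_tsub_distrib _ fun i _ => h2 i
    omega
  · rintro ⟨γ, β⟩ h
    simp only [Finset.mem_sigma, mem_midx, Fintype.mem_piFinset, Finset.mem_range] at h ⊢
    have h4 : ∑ i, (γ + β) i = ∑ i, γ i + ∑ i, β i := Finset.sum_add_distrib
    refine ⟨by omega, fun i => by simp only [Pi.add_apply]; omega⟩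
  · rintro ⟨α, γ⟩ h
    simp only [Finset.mem_sigma, mem_midx, Fintype.mem_piFinset, Finset.mem_range] at h
    have : γ + (α - γ) = α := by
      funext i; have := h.2 i; simp only [Pi.add_apply, Pi.sub_apply]; omega
    simp [this]
  · rintro ⟨γ, β⟩ h
    simp
  · rintro ⟨α, γ⟩ h
    simp only [Finset.mem_sigma, mem_midx, Fintype.mem_piFinset, Finset.mem_range] at h
    have : γ + (α - γ) = α := by
      funext i; have := h.2 i; simp only [Pi.add_apply, Pi.sub_apply]; omega
    simp [this]

/-- The difference of Taylor polynomials of consecutive degrees at two base points, expanded at the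
second one: the coefficients are Whitney remainders, and jet entries in the top degree. -/
lemma Tpoly_sub (F : (Fin n → ℕ) → EuclideanSpace ℝ (Fin n) → ℝ)
    (a b : EuclideanSpace ℝ (Fin n)) (p : ℕ) (x : EuclideanSpace ℝ (Fin n)) :
    Tpoly F b (p + 1) x - Tpoly F a p x = polyAt b
      (fun γ => if ∑ i, γ i ≤ p then Rrem F a p γ b else F γ b) (p + 1) x := by
  rw [Tpoly_recenter F a b p x, Tpoly_eq]
  unfold polyAt
  have hsub : midx n p ⊆ midx n (p + 1) := fun γ h => by
    rw [mem_midx] at h ⊢; omega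
  rw [← Finset.sum_sdiff hsub, ← Finset.sum_sdiff hsub, add_sub_assoc, ← Finset.sum_sub_distrib]
  congr 1
  · refine Finset.sum_congr rfl fun γ hγ => ?_
    rw [Finset.mem_sdiff, mem_midx, mem_midx] at hγ
    beta_reduce
    rw [if_neg hγ.2]
  · refine Finset.sum_congr rfl fun γ hγ => ?_
    rw [mem_midx] at hγ
    beta_reduce
    rw [if_pos hγ, ← mul_sub]
    rfl

end Taylor

/-! ### Partitions of unity subordinate to a grid -/

section Cutoff

variable {n : ℕ}

/-- A finite smooth partition of unity near `E` at scale `r`, indexed by grid points: every cutoff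
`Φ Q` has derivatives bounded by `K Λ^k N_k` and carries a point `c Q` of `E`. The set `B x`
contains the indices whose cutoff does not vanish to infinite order at `x`; there are at most `3^n`
of them, and their points lie within `2r` of `x` in each coordinate. -/
structure CutoffSystem (E : Set (EuclideanSpace ℝ (Fin n))) (N : ℕ → ℝ) (r K Λ : ℝ) where
  A : Finset (Fin n → ℤ)
  Φ : (Fin n → ℤ) → EuclideanSpace ℝ (Fin n) → ℝ
  c : (Fin n → ℤ) → EuclideanSpace ℝ (Fin n)
  B : EuclideanSpace ℝ (Fin n) → Finset (Fin n → ℤ)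
  smooth : ∀ Q, ContDiff ℝ (⊤ : ℕ∞) (Φ Q)
  c_mem : ∀ Q ∈ A, c Q ∈ E
  bound : ∀ Q l x, |wordD l (Φ Q) x| ≤ K * Λ ^ l.length * N l.length
  B_sub : ∀ x, B x ⊆ A
  B_card : ∀ x, ((B x).card : ℝ) ≤ 3 ^ n
  B_off : ∀ x, ∀ Q ∈ A, Q ∉ B x → ∀ l, wordD l (Φ Q) x = 0
  B_near : ∀ x, ∀ Q ∈ B x, ∀ i, |x i - c Q i| ≤ 2 * r
  sum_one : ∀ a ∈ E, ∀ᶠ x in nhds a, ∑ Q ∈ A, Φ Q x = 1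

lemma iteratedDeriv_affine {u : ℝ → ℝ} (hu : ContDiff ℝ (⊤ : ℕ∞) u) (k : ℕ) (s b t : ℝ) :
    iteratedDeriv k (fun t => u (s * t - b)) t = s ^ k * iteratedDeriv k u (s * t - b) := by
  have hu' : ContDiff ℝ (⊤ : ℕ∞) fun t => u (t - b) := hu.comp (contDiff_id.sub contDiff_const)
  have h := iteratedDeriv_comp_const_mul (n := k) (f := fun t => u (t - b))
    (hu'.of_le (by exact_mod_cast le_top)) s
  have h2 := iteratedDeriv_comp_sub_const k u b
  rw [h2] at h
  simpa using congrFun h t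

lemma card_Icc_near (t : ℝ) : ((Finset.Icc ⌈t - 1⌉ ⌊t + 1⌋).card : ℝ) ≤ 3 := by
  have h : (Finset.Icc ⌈t - 1⌉ ⌊t + 1⌋).card ≤ 3 := by
    rw [Int.card_Icc, Int.ceil_sub_one, Int.floor_add_one]
    have := Int.floor_le_ceil t
    omega
  exact_mod_cast h

lemma abs_coord_le_norm (x : EuclideanSpace ℝ (Fin n)) (i : Fin n) : |x i| ≤ ‖x‖ := by
  simpa using PiLp.norm_apply_le x i

lemma norm_le_of_coord {x : EuclideanSpace ℝ (Fin n)} {δ : ℝ} (h : ∀ i, |x i| ≤ δ) :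
    ‖x‖ ≤ n * δ := by
  have hx : x = ∑ i, x i • EuclideanSpace.single i (1 : ℝ) := by
    ext j
    simp [Pi.single_apply]
  calc ‖x‖ = ‖∑ i, x i • EuclideanSpace.single i (1 : ℝ)‖ := by rw [← hx]
    _ ≤ ∑ i, ‖x i • EuclideanSpace.single i (1 : ℝ)‖ := norm_sum_le _ _
    _ ≤ ∑ _i : Fin n, δ := Finset.sum_le_sum fun i _ => by
        rw [norm_smul]; simpa using h i
    _ = n * δ := by simp

/-- The cutoffs are tensor products of the bumps of `exists_bump` on the grid of mesh `r`. Those whose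
support box meets `E` are kept, each with a point of `E` in its box. -/
lemma exists_cutoffSystem {ν : ℕ → ℝ} (hνpos : ∀ k, 0 < ν k) (hνmono : Monotone ν) (hν0 : ν 0 = 1)
    (hnq : Summable fun k => 1 / ν k) {H : ℝ} (hH : 1 ≤ H) {p : ℕ} (hp1 : 1 ≤ p)
    (hp : ν p ^ p ≤ H ^ p * prodSeq ν p) {E : Set (EuclideanSpace ℝ (Fin n))} (hE : IsCompact E)
    {r : ℝ} (hr : 0 < r) :
    Nonempty (CutoffSystem E (prodSeq ν) r ((2 * H ^ p) ^ n) (4 * tauSeq ν p / r)) := by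
  classical
  obtain ⟨u, hu, husupp, hupart, hub⟩ := exists_bump hνpos hνmono hnq hp1 hp
  obtain ⟨R, hR⟩ := hE.isBounded.exists_norm_le
  obtain ⟨M, hM⟩ := exists_nat_ge (r⁻¹ * (R + 1))
  have hτ := tauSeq_pos hνpos hnq p
  set g : (Fin n → ℤ) → Fin n → ℝ → ℝ := fun Q i t => u (r⁻¹ * t - Q i) with hgdef
  have hg : ∀ Q i, ContDiff ℝ (⊤ : ℕ∞) (g Q i) := fun Q i =>
    hu.comp ((contDiff_const.mul contDiff_id).sub contDiff_const)
  set Φ : (Fin n → ℤ) → EuclideanSpace ℝ (Fin n) → ℝ := fun Q x => ∏ i, g Q i (x i) with hΦ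
  have hwd : ∀ Q l x, wordD l (Φ Q) x =
      ∏ i, (r⁻¹ ^ l.count i * iteratedDeriv (l.count i) u (r⁻¹ * x i - Q i)) := by
    intro Q l x
    rw [hΦ]
    dsimp only
    rw [wordD_tensor (hg Q)]
    exact Finset.prod_congr rfl fun i _ => iteratedDeriv_affine hu _ _ _ _
  have hvan : ∀ t, 1 < |t| → u =ᶠ[nhds t] fun _ => 0 := by
    intro t ht
    filter_upwards [(isOpen_lt continuous_const continuous_abs).mem_nhds ht] with s hs
    exact husupp s hs
  have hoff : ∀ Q l (x : EuclideanSpace ℝ (Fin n)) (i : Fin n), 1 < |r⁻¹ * x i - Q i| →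
      wordD l (Φ Q) x = 0 := by
    intro Q l x i hi
    rw [hwd]
    refine Finset.prod_eq_zero (Finset.mem_univ i) ?_
    rw [(hvan _ hi).iteratedDeriv_eq]
    simp
  set box : Finset (Fin n → ℤ) := Fintype.piFinset fun _ => Finset.Icc (-M : ℤ) M with hbox
  set P : (Fin n → ℤ) → Prop := fun Q => ∃ a ∈ E, ∀ i, |r⁻¹ * a i - Q i| ≤ 1 with hP
  have hsub : ∀ (x : EuclideanSpace ℝ (Fin n)) (Q : Fin n → ℤ), (∀ i, |r⁻¹ * x i - Q i| ≤ 1) →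
      Q ∈ Fintype.piFinset fun i => Finset.Icc ⌈r⁻¹ * x i - 1⌉ ⌊r⁻¹ * x i + 1⌋ := by
    intro x Q h
    rw [Fintype.mem_piFinset]
    intro i
    have := abs_le.1 (h i)
    rw [Finset.mem_Icc, Int.ceil_le, Int.le_floor]
    constructor <;> linarith
  refine ⟨⟨box.filter P, Φ, fun Q => if h : P Q then h.choose else 0,
    fun x => (box.filter P).filter fun Q => ∀ i, |r⁻¹ * x i - Q i| ≤ 1, ?_, ?_, ?_, ?_, ?_, ?_,
      ?_, ?_⟩⟩
  · intro Q
    refine contDiff_prod fun i _ => (hg Q i).comp ?_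
    exact (EuclideanSpace.proj (𝕜 := ℝ) i).contDiff
  · intro Q hQ
    have h := (Finset.mem_filter.1 hQ).2
    simp only [dif_pos h]
    exact h.choose_spec.1
  · intro Q l x
    rw [hwd, Finset.abs_prod]
    have h1 : ∀ i, |r⁻¹ ^ l.count i * iteratedDeriv (l.count i) u (r⁻¹ * x i - Q i)|
        ≤ (2 * H ^ p) * (4 * tauSeq ν p / r) ^ l.count i * prodSeq ν (l.count i) := by
      intro i
      rw [abs_mul, abs_of_pos (by positivity)]
      refine (mul_le_mul_of_nonneg_left (hub _ _) (by positivity)).trans_eq ?_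
      rw [div_eq_mul_inv, mul_pow (4 * tauSeq ν p)]
      ring
    refine (Finset.prod_le_prod (fun _ _ => abs_nonneg _) fun i _ => h1 i).trans ?_
    rw [Finset.prod_mul_distrib, Finset.prod_mul_distrib, Finset.prod_pow_eq_pow_sum, sum_count]
    have h2 := prodSeq_prod_le hνpos hνmono hν0 Finset.univ fun i => l.count i
    rw [sum_count] at h2
    rw [Finset.prod_const, Finset.card_univ, Fintype.card_fin]
    gcongr
  · exact fun x => Finset.filter_subset _ _
  · intro x
    have h : (((box.filter P).filter fun Q => ∀ i, |r⁻¹ * x i - Q i| ≤ 1).card : ℝ)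
        ≤ ((Fintype.piFinset fun i => Finset.Icc ⌈r⁻¹ * x i - 1⌉ ⌊r⁻¹ * x i + 1⌋).card : ℝ) := by
      exact_mod_cast Finset.card_le_card fun Q hQ => hsub x Q (Finset.mem_filter.1 hQ).2
    refine h.trans ?_
    rw [Fintype.card_piFinset]
    push_cast
    refine (Finset.prod_le_prod (fun _ _ => by positivity)
      fun i _ => card_Icc_near (r⁻¹ * x i)).trans_eq ?_
    simp
  · intro x Q hQ hQB l
    have : ¬ ∀ i, |r⁻¹ * x i - Q i| ≤ 1 := fun h => hQB (Finset.mem_filter.2 ⟨hQ, h⟩)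
    push Not at this
    obtain ⟨i, hi⟩ := this
    exact hoff Q l x i hi
  · intro x Q hQ i
    have h := Finset.mem_filter.1 hQ
    have hPQ := (Finset.mem_filter.1 h.1).2
    simp only [dif_pos hPQ]
    have h1 := abs_le.1 (h.2 i)
    have h2 := abs_le.1 (hPQ.choose_spec.2 i)
    have h3 : |r⁻¹ * x i - r⁻¹ * hPQ.choose i| ≤ 2 := abs_le.2 ⟨by linarith, by linarith⟩
    rw [← mul_sub, abs_mul, abs_of_pos (inv_pos.2 hr), inv_mul_le_iff₀ hr] at h3
    linarith
  · intro a ha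
    have h1 : ∀ᶠ x in nhds a, ∀ Q ∈ box.filter (fun Q => ¬ P Q), Φ Q x = 0 := by
      rw [Filter.eventually_all_finset]
      intro Q hQ
      have hQ := (Finset.mem_filter.1 hQ).2
      simp only [hP] at hQ
      push Not at hQ
      obtain ⟨i, hi⟩ := hQ a ha
      have hc : Continuous fun x : EuclideanSpace ℝ (Fin n) => |r⁻¹ * x i - Q i| := by fun_prop
      filter_upwards [(isOpen_lt continuous_const hc).mem_nhds hi] with x hx
      exact hoff Q [] x i hx
    have h2 : ∀ᶠ x in nhds a, ‖x‖ < R + 1 :=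
      (isOpen_lt continuous_norm continuous_const).mem_nhds (by
        have := hR a ha
        change ‖a‖ < R + 1
        linarith)
    filter_upwards [h1, h2] with x hx1 hx2
    have h3 : ∑ Q ∈ box, Φ Q x = 1 := by
      have := Finset.prod_univ_sum (fun _ : Fin n => Finset.Icc (-M : ℤ) M)
        fun i m => u (r⁻¹ * x i - (m : ℝ))
      refine this.symm.trans (Finset.prod_eq_one fun i _ => hupart M _ ?_)
      rw [abs_mul, abs_of_pos (inv_pos.2 hr)]
      refine le_trans ?_ hM
      have := abs_coord_le_norm x i
      gcongr
      linarith
    rw [← Finset.sum_filter_add_sum_filter_not box P, Finset.sum_eq_zero hx1, add_zero] at h3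
    exact h3

lemma wordD_mul_eq_zero {x : EuclideanSpace ℝ (Fin n)} (l : List (Fin n)) :
    ∀ {f g : EuclideanSpace ℝ (Fin n) → ℝ}, ContDiff ℝ (⊤ : ℕ∞) f → ContDiff ℝ (⊤ : ℕ∞) g →
      (∀ l, wordD l f x = 0) → wordD l (fun y => f y * g y) x = 0 := by
  induction l using List.reverseRecOn with
  | nil =>
    intro f g _ _ h
    have := h []
    rw [wordD_nil] at this ⊢
    rw [this, zero_mul]
  | append_singleton l i ih =>
    intro f g hf hg h
    have hpf := contDiff_pderivE hf i
    have hpg := contDiff_pderivE hg i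
    rw [wordD_append, wordD_cons, wordD_nil, pderivE_mul hf hg, wordD_add (hpf.mul hg)
        (hf.mul hpg)]
    have h1 : ∀ l', wordD l' (pderivE i f) x = 0 := fun l' => by
      have := h (l' ++ [i])
      rwa [wordD_append, wordD_cons, wordD_nil] at this
    beta_reduce
    rw [ih hpf hg h1, ih hf hpg h, add_zero]

/-- Gluing functions with a cutoff system costs a constant factor at each point. -/
lemma CutoffSystem.sum_le {E : Set (EuclideanSpace ℝ (Fin n))} {N : ℕ → ℝ} {r K Λ : ℝ}
    (X : CutoffSystem E N r K Λ) (hM : ∀ j k, N j * N k ≤ N (j + k)) (hM0 : ∀ k, 0 ≤ N k)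
    (hK : 0 ≤ K) (hΛ : 0 ≤ Λ) {W μ : ℝ} (hW : 0 ≤ W) (hμ : 0 ≤ μ)
    {g : (Fin n → ℤ) → EuclideanSpace ℝ (Fin n) → ℝ} (hg : ∀ Q, ContDiff ℝ (⊤ : ℕ∞) (g Q))
    {x : EuclideanSpace ℝ (Fin n)}
    (hb : ∀ Q ∈ X.B x, ∀ l, |wordD l (g Q) x| ≤ W * μ ^ l.length * N l.length)
    (l : List (Fin n)) :
    |wordD l (fun y => ∑ Q ∈ X.A, X.Φ Q y * g Q y) x|
      ≤ 3 ^ n * K * W * (Λ + μ) ^ l.length * N l.length := by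
  rw [wordD_sum _ fun Q _ => (X.smooth Q).mul (hg Q)]
  beta_reduce
  rw [← Finset.sum_subset (X.B_sub x) fun Q hQ hQB =>
    wordD_mul_eq_zero l (X.smooth Q) (hg Q) (X.B_off x Q hQ hQB)]
  refine (Finset.abs_sum_le_sum_abs _ _).trans ?_
  refine (Finset.sum_le_sum fun Q hQ => wordD_mul_le hM hM0 hΛ hμ (X.smooth Q) (hg Q) hK hW
    (fun l => X.bound Q l x) (hb Q hQ) l).trans ?_
  rw [Finset.sum_const, nsmul_eq_mul]
  have := X.B_card x
  have := hM0 l.length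
  calc _ ≤ (3 : ℝ) ^ n * (K * W * (Λ + μ) ^ l.length * N l.length) := by gcongr
    _ = _ := by ring

end Cutoff

/-! ### Extension of Whitney jets -/

section Extension

variable {n : ℕ} {ν : ℕ → ℝ}

lemma contDiff_Tpoly (F : (Fin n → ℕ) → EuclideanSpace ℝ (Fin n) → ℝ)
    (a : EuclideanSpace ℝ (Fin n)) (p : ℕ) : ContDiff ℝ (⊤ : ℕ∞) (Tpoly F a p) :=
  contDiff_polyAt _ _ _

/-- Taylor polynomials of consecutive degrees at nearby points of `E` are close to each other
near these points. -/
lemma wordD_Tpoly_sub_le (hνpos : ∀ k, 0 < ν k) (hνmono : Monotone ν) (hν0 : ν 0 = 1)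
    (hnq : Summable fun k => 1 / ν k) {E : Set (EuclideanSpace ℝ (Fin n))}
    {F : (Fin n → ℕ) → EuclideanSpace ℝ (Fin n) → ℝ} {C ρ : ℝ} (hC : 0 < C) (hρ : 0 < ρ)
    (hF : ∀ α : Fin n → ℕ, ∀ a ∈ E,
      |F α a| ≤ C * ρ ^ (∑ i, α i) * prodSeq (sigmaSeq ν) (∑ i, α i))
    (hR : ∀ p : ℕ, ∀ α : Fin n → ℕ, ∑ i, α i ≤ p → ∀ a ∈ E, ∀ b ∈ E,
      |Rrem F a p α b| ≤ C * ρ ^ (p + 1) * prodSeq (sigmaSeq ν) (p + 1) *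
        ‖b - a‖ ^ (p + 1 - ∑ i, α i) / (Nat.factorial (p + 1 - ∑ i, α i) : ℝ))
    {p : ℕ} {D η : ℝ} (hη : 0 < η) (hD : 0 ≤ D)
    (h : tauSeq ν 1 * D ≤ η * tauSeq ν (p + 1)) {a b x : EuclideanSpace ℝ (Fin n)}
    (ha : a ∈ E) (hb : b ∈ E) (hab : ‖b - a‖ ≤ D) (hx : ∀ i, |x i - b i| ≤ D)
    (l : List (Fin n)) :
    |wordD l (fun y => Tpoly F b (p + 1) y - Tpoly F a p y) x|
      ≤ C * (ρ * 4 ^ (n + 1) * η) ^ (p + 1) * (tauSeq ν 1 / η) ^ l.length *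
        prodSeq ν l.length := by
  have hS := prodSeq_pos (sigmaSeq_pos hνpos hnq) (p + 1)
  rw [show (fun y => Tpoly F b (p + 1) y - Tpoly F a p y) = polyAt b
      (fun γ => if ∑ i, γ i ≤ p then Rrem F a p γ b else F γ b) (p + 1) from
    funext fun y => Tpoly_sub F a b p y]
  refine (wordD_polyAt_le hνpos hνmono hν0 hnq hD hη (C := C * ρ ^ (p + 1)) (by positivity)
    h hx ?_ l).trans_eq ?_
  · intro γ hγ
    by_cases hc : ∑ i, γ i ≤ p
    · rw [if_pos hc]
      refine (hR p γ hc a ha b hb).trans ?_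
      gcongr
    · rw [if_neg hc, show ∑ i, γ i = p + 1 by omega]
      have := hF γ b hb
      rw [show ∑ i, γ i = p + 1 by omega] at this
      simpa using this
  · rw [mul_assoc ρ, mul_pow ρ]
    ring

lemma wordD_Tpoly_one_le (hνpos : ∀ k, 0 < ν k) (hνmono : Monotone ν) (hν0 : ν 0 = 1)
    (hnq : Summable fun k => 1 / ν k) {E : Set (EuclideanSpace ℝ (Fin n))}
    {F : (Fin n → ℕ) → EuclideanSpace ℝ (Fin n) → ℝ} {C ρ : ℝ} (hC : 0 < C) (hρ : 0 < ρ)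
    (hF : ∀ α : Fin n → ℕ, ∀ a ∈ E,
      |F α a| ≤ C * ρ ^ (∑ i, α i) * prodSeq (sigmaSeq ν) (∑ i, α i))
    {D η : ℝ} (hη : 0 < η) (hD : 0 < D)
    (h : tauSeq ν 1 * D ≤ η * tauSeq ν 1) {b x : EuclideanSpace ℝ (Fin n)}
    (hb : b ∈ E) (hx : ∀ i, |x i - b i| ≤ D) (l : List (Fin n)) :
    |wordD l (Tpoly F b 1) x|
      ≤ C * (ρ + 1 / D) * (4 ^ (n + 1) * η) * (tauSeq ν 1 / η) ^ l.length *
        prodSeq ν l.length := by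
  have hS0 : prodSeq (sigmaSeq ν) 0 = 1 := prodSeq_zero rfl
  have hS1 : prodSeq (sigmaSeq ν) 1 = 1 := by
    rw [prodSeq_succ, hS0, sigmaSeq_one hνpos hnq, one_mul]
  rw [Tpoly_eq]
  refine (wordD_polyAt_le hνpos hνmono hν0 hnq hD.le hη (C := C * (ρ + 1 / D)) (by positivity)
    h hx ?_ l).trans_eq (by rw [pow_one])
  intro γ hγ
  have hFγ := hF γ b hb
  rw [hS1, mul_one]
  obtain hs | hs : ∑ i, γ i = 0 ∨ ∑ i, γ i = 1 := by omega
  · rw [hs, hS0] at hFγ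
    rw [hs]
    have : C * (ρ + 1 / D) * D = C * ρ * D + C := by field_simp
    have h3 : 0 ≤ C * ρ * D := by positivity
    simp only [pow_zero, mul_one, Nat.sub_zero, pow_one, Nat.factorial_one, Nat.cast_one,
      div_one] at hFγ ⊢
    linarith
  · rw [hs, hS1] at hFγ
    rw [hs]
    have h3 : 0 ≤ C * (1 / D) := by positivity
    simp only [pow_zero, mul_one, Nat.sub_self, pow_one, Nat.factorial_zero, Nat.cast_one,
      div_one] at hFγ ⊢
    linarith

/-- Whitney extension for doubling `ν`. The functions glued from Taylor polynomials of degree `p + 1`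
on the scale `τ_{p+1}/L` form a telescoping series, with terms of size `2^{-p}` in a fixed norm of
class `N`. -/
theorem exists_extension (hνpos : ∀ k, 0 < ν k) (hνmono : Monotone ν) (hν0 : ν 0 = 1)
    (hnq : Summable fun k => 1 / ν k) {H : ℝ} (hH : 1 ≤ H)
    (hp : ∀ p, ν p ^ p ≤ H ^ p * prodSeq ν p) (hd : ∀ p, ν (2 * p) ≤ H * ν p)
    {E : Set (EuclideanSpace ℝ (Fin n))} (hE : IsCompact E)
    {F : (Fin n → ℕ) → EuclideanSpace ℝ (Fin n) → ℝ} {C ρ : ℝ} (hC : 0 < C) (hρ : 0 < ρ)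
    (hF : ∀ α : Fin n → ℕ, ∀ a ∈ E,
      |F α a| ≤ C * ρ ^ (∑ i, α i) * prodSeq (sigmaSeq ν) (∑ i, α i))
    (hR : ∀ p : ℕ, ∀ α : Fin n → ℕ, ∑ i, α i ≤ p → ∀ a ∈ E, ∀ b ∈ E,
      |Rrem F a p α b| ≤ C * ρ ^ (p + 1) * prodSeq (sigmaSeq ν) (p + 1) *
        ‖b - a‖ ^ (p + 1 - ∑ i, α i) / (Nat.factorial (p + 1 - ∑ i, α i) : ℝ)) :
    ∃ f : EuclideanSpace ℝ (Fin n) → ℝ, MemBM (prodSeq ν) f ∧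
      ∀ α : Fin n → ℕ, ∀ a ∈ E, pderivMulti α f a = F α a := by
  have hτ := tauSeq_pos hνpos hnq
  have hτ1 := hτ 1
  have hH0 : 0 < H := by linarith
  have hNpos := prodSeq_pos hνpos
  have hN0 : ∀ k, 0 ≤ prodSeq ν k := fun k => (hNpos k).le
  have hNN := prodSeq_mul_le hνpos hνmono hν0
  -- `η` is so small that the gain from the Taylor estimates beats the growth of the cutoffs.
  obtain ⟨η, hη, hηeq⟩ : ∃ η : ℝ, 0 < η ∧ ρ * 4 ^ (n + 1) * η * (H ^ n * H ^ n) = 1 / 2 :=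
    ⟨1 / (2 * (ρ * 4 ^ (n + 1) * (H ^ n * H ^ n))), by positivity, by field_simp⟩
  set θ : ℝ := ρ * 4 ^ (n + 1) * η with hθdef
  have hθ : 0 < θ := by positivity
  set L : ℝ := 4 * (n + 1) * tauSeq ν 1 * H / η with hL
  have hL0 : 0 < L := by positivity
  set r : ℕ → ℝ := fun p => tauSeq ν (p + 1) / L with hr
  have hr0 : ∀ p, 0 < r p := fun p => div_pos (hτ _) hL0
  have hranti : ∀ p, r (p + 1) ≤ r p := fun p =>
    div_le_div_of_nonneg_right (tauSeq_anti hνpos hνmono hnq (by omega)) hL0.le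
  set D : ℕ → ℝ := fun p => 4 * (n + 1) * r p with hDdef
  have hD0 : ∀ p, 0 < D p := fun p => by have := hr0 p; positivity
  have hD1 : ∀ p, tauSeq ν 1 * D p ≤ η * tauSeq ν (p + 1 + 1) := by
    intro p
    have h1 := tauSeq_succ_ge hνpos hνmono hnq hH hd (p := p + 1) (by omega)
    have h2 : tauSeq ν 1 * D p = η * (tauSeq ν (p + 1) / H) := by
      simp only [hDdef, hr, hL]
      field_simp
    rw [h2]
    gcongr
    rwa [div_le_iff₀' hH0]
  have hDr : ∀ p, 2 * r p ≤ D p := fun p => by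
    have := hr0 p
    have h2 : (0 : ℝ) ≤ n * r p := by positivity
    simp only [hDdef]
    linarith
  have hDr4 : ∀ p, n * (4 * r p) ≤ D p := fun p => by
    have := hr0 p
    simp only [hDdef]
    linarith
  have hX : ∀ p, Nonempty (CutoffSystem E (prodSeq ν) (r p) ((2 * H ^ (p + 1)) ^ n) (4 * L)) := by
    intro p
    have := exists_cutoffSystem hνpos hνmono hν0 hnq hH (p := p + 1) (by omega) (hp _) hE (hr0 p)
    rwa [show 4 * tauSeq ν (p + 1) / r p = 4 * L by
      have := (hτ (p + 1)).ne'
      simp only [hr]; field_simp] at this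
  have X := fun p => (hX p).some
  -- `G p` glues the Taylor polynomials of degree `p + 1`; near `E`, `J p` is `G (p + 1) - G p`.
  set G : ℕ → EuclideanSpace ℝ (Fin n) → ℝ := fun p x =>
    ∑ Q ∈ (X p).A, (X p).Φ Q x * Tpoly F ((X p).c Q) (p + 1) x with hG
  set I : ℕ → EuclideanSpace ℝ (Fin n) → EuclideanSpace ℝ (Fin n) → ℝ := fun p a x =>
    ∑ Q' ∈ (X (p + 1)).A, (X (p + 1)).Φ Q' x *
      (Tpoly F ((X (p + 1)).c Q') (p + 1 + 1) x - Tpoly F a (p + 1) x) with hI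
  set J : ℕ → EuclideanSpace ℝ (Fin n) → ℝ := fun p x =>
    ∑ Q ∈ (X p).A, (X p).Φ Q x * I p ((X p).c Q) x with hJ
  have hGs : ∀ p, ContDiff ℝ (⊤ : ℕ∞) (G p) := fun p =>
    ContDiff.sum fun Q _ => ((X p).smooth Q).mul (contDiff_Tpoly _ _ _)
  have hIs : ∀ p a, ContDiff ℝ (⊤ : ℕ∞) (I p a) := fun p a =>
    ContDiff.sum fun Q _ => ((X (p + 1)).smooth Q).mul
      ((contDiff_Tpoly _ _ _).sub (contDiff_Tpoly _ _ _))
  have hJs : ∀ p, ContDiff ℝ (⊤ : ℕ∞) (J p) := fun p =>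
    ContDiff.sum fun Q _ => ((X p).smooth Q).mul (hIs _ _)
  have hK0 : ∀ p, 0 ≤ (2 * H ^ (p + 1)) ^ n := fun p => by positivity
  have hK1 : ∀ p, (2 * H ^ (p + 1)) ^ n ≤ 2 ^ n * (H ^ n) ^ (p + 1) := fun p => by
    rw [mul_pow, ← pow_mul, ← pow_mul, mul_comm n]
  have hHn : 1 ≤ H ^ n := one_le_pow₀ hH
  have hK2 : ∀ p, (2 * H ^ (p + 1)) ^ n ≤ 2 ^ n * (H ^ n) ^ (p + 1 + 1) := fun p =>
    (hK1 p).trans (by gcongr; omega)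
  have hgain : ∀ p, (H ^ n) ^ p * (H ^ n) ^ p * θ ^ p = (1 / 2) ^ p := fun p => by
    rw [← mul_pow, ← mul_pow, mul_comm, hηeq]
  have hgain' : ∀ p, (H ^ n) ^ p * θ ^ p ≤ (1 / 2) ^ p := fun p => by
    rw [← hgain p]
    have : 1 ≤ (H ^ n) ^ p := one_le_pow₀ hHn
    have h2 : 0 ≤ (H ^ n) ^ p * θ ^ p := by positivity
    nlinarith
  have h6 : (6 : ℝ) ^ n = 3 ^ n * 2 ^ n := by rw [← mul_pow]; norm_num
  have h36 : (36 : ℝ) ^ n = 3 ^ n * 2 ^ n * (3 ^ n * 2 ^ n) := by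
    rw [← mul_pow, ← mul_pow]; norm_num
  set Λ : ℝ := 4 * L + (4 * L + tauSeq ν 1 / η) with hΛ
  have hμ0 : 0 < tauSeq ν 1 / η := by positivity
  have hΛ0 : 0 < Λ := by positivity
  have hΛ1 : 4 * L + tauSeq ν 1 / η ≤ Λ := by linarith
  have hJb : ∀ p l x, |wordD l (J p) x|
      ≤ (36 ^ n * C) * Λ ^ l.length * prodSeq ν l.length * (1 / 2) ^ (p + 1) := by
    intro p l x
    have h1 : ∀ Q ∈ (X p).B x, ∀ l, |wordD l (I p ((X p).c Q)) x| ≤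
        (3 ^ n * (2 * H ^ (p + 1 + 1)) ^ n * (C * θ ^ (p + 1 + 1))) *
          (4 * L + tauSeq ν 1 / η) ^ l.length * prodSeq ν l.length := by
      intro Q hQ l
      refine (X (p + 1)).sum_le hNN hN0 (hK0 _) (by positivity) (by positivity) hμ0.le
        (fun Q' => (contDiff_Tpoly _ _ _).sub (contDiff_Tpoly _ _ _)) ?_ l
      intro Q' hQ' l
      have n1 := (X p).B_near x Q hQ
      have n2 := (X (p + 1)).B_near x Q' hQ'
      have hra := hranti p
      refine wordD_Tpoly_sub_le hνpos hνmono hν0 hnq hC hρ hF hR hη (hD0 p).le (hD1 p)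
        ((X p).c_mem Q ((X p).B_sub x hQ)) ((X (p + 1)).c_mem Q' ((X (p + 1)).B_sub x hQ')) ?_ ?_ l
      · refine (norm_le_of_coord (δ := 4 * r p) fun i => ?_).trans (hDr4 p)
        have m1 := abs_le.1 (n1 i)
        have m2 := abs_le.1 (n2 i)
        rw [PiLp.sub_apply, abs_le]
        constructor <;> linarith
      · intro i
        have := n2 i
        have := hDr p
        linarith
    refine ((X p).sum_le hNN hN0 (hK0 _) (by positivity) (by positivity) (by positivity)
      (fun Q => hIs _ _) h1 l).trans ?_
    have hN := hNpos l.length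
    calc _ ≤ 3 ^ n * (2 ^ n * (H ^ n) ^ (p + 1 + 1)) * (3 ^ n * (2 ^ n * (H ^ n) ^ (p + 1 + 1)) *
            (C * θ ^ (p + 1 + 1))) * Λ ^ l.length * prodSeq ν l.length := by
          have := hK2 p
          have := hK1 (p + 1)
          gcongr
      _ = (36 ^ n * C) * Λ ^ l.length * prodSeq ν l.length * (1 / 2) ^ (p + 1 + 1) := by
          rw [← hgain, h36]
          ring
      _ ≤ _ := by
          gcongr ?_ * ?_
          exact pow_le_pow_of_le_one (by norm_num) (by norm_num) (by omega)
  set K₁ : ℝ := 3 ^ n * (2 * H ^ (0 + 1)) ^ n * (C * (ρ + 1 / D 0) * (4 ^ (n + 1) * η)) with hK₁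
  have hD00 := hD0 0
  have hK₁0 : 0 ≤ K₁ := by positivity
  have hG0 : ∀ l x, |wordD l (G 0) x| ≤ K₁ * Λ ^ l.length * prodSeq ν l.length := by
    intro l x
    have hN := hNpos l.length
    refine ((X 0).sum_le hNN hN0 (hK0 _) (W := C * (ρ + 1 / D 0) * (4 ^ (n + 1) * η))
      (μ := tauSeq ν 1 / η) (by positivity) (by positivity) hμ0.le
      (fun Q => contDiff_Tpoly _ _ _) ?_ l).trans (by gcongr)
    intro Q hQ l
    refine wordD_Tpoly_one_le hνpos hνmono hν0 hnq hC hρ hF hη hD00 ((hD1 0).trans ?_)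
      ((X 0).c_mem Q ((X 0).B_sub x hQ)) ?_ l
    · have := tauSeq_anti hνpos hνmono hnq (show 1 ≤ 0 + 1 + 1 by omega)
      gcongr
    · intro i
      exact ((X 0).B_near x Q hQ i).trans (hDr 0)
  set h : ℕ → EuclideanSpace ℝ (Fin n) → ℝ := fun p => Nat.casesOn p (G 0) J with hh
  set K : ℝ := K₁ + 36 ^ n * C with hK
  have hKp : 0 < K := by positivity
  have hhs : ∀ p, ContDiff ℝ (⊤ : ℕ∞) (h p) := fun p => by
    cases p with
    | zero => exact hGs 0
    | succ p => exact hJs p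
  have hhb : ∀ p l x, |wordD l (h p) x|
      ≤ K * Λ ^ l.length * prodSeq ν l.length * (1 / 2) ^ p := by
    intro p l x
    have hN := hNpos l.length
    cases p with
    | zero =>
      rw [pow_zero, mul_one]
      refine (hG0 l x).trans ?_
      gcongr
      exact le_add_of_nonneg_right (by positivity)
    | succ p =>
      refine (hJb p l x).trans ?_
      gcongr
      exact le_add_of_nonneg_left hK₁0
  have hgeo : ∀ c : ℝ, HasSum (fun p : ℕ => c * (1 / 2) ^ p) (c * 2) := fun c =>
    hasSum_geometric_two.mul_left c
  obtain ⟨hfs, hfw⟩ := wordD_tsum hhs (v := fun k p => K * Λ ^ k * prodSeq ν k * (1 / 2) ^ p)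
    (fun k => (hgeo _).summable) hhb
  refine ⟨fun x => ∑' p, h p x, ⟨hfs, K * 2, by positivity, Λ, hΛ0, fun α x => ?_⟩,
    fun α a ha => ?_⟩
  · rw [pderivMulti_eq_wordD, ← length_sortedWord α]
    refine ((hfw (sortedWord α) x).norm_le_of_bounded (hgeo _)
      fun p => hhb p (sortedWord α) x).trans_eq ?_
    ring
  · rw [pderivMulti_eq_wordD]
    set l := sortedWord α with hl
    have hpart : ∀ P, (fun x => ∑ p ∈ Finset.range (P + 1), h p x) =ᶠ[nhds a] G P := by
      intro P
      induction P with
      | zero => exact Filter.Eventually.of_forall fun x => by simp [hh]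
      | succ P ih =>
        filter_upwards [ih, (X P).sum_one a ha, (X (P + 1)).sum_one a ha] with x h1 h2 h3
        rw [Finset.sum_range_succ, h1]
        have e1 : ∀ b, I P b x = G (P + 1) x - Tpoly F b (P + 1) x := fun b => by
          simp only [hI, hG, mul_sub, Finset.sum_sub_distrib, ← Finset.sum_mul, h3, one_mul]
        have e2 : h (P + 1) x = G (P + 1) x - G P x := by
          change ∑ Q ∈ (X P).A, (X P).Φ Q x * I P ((X P).c Q) x = _
          simp only [e1, mul_sub, Finset.sum_sub_distrib, ← Finset.sum_mul, h2, one_mul]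
          rfl
        rw [e2]
        ring
    have hpw : ∀ P, ∑ p ∈ Finset.range (P + 1), wordD l (h p) a = wordD l (G P) a := by
      intro P
      rw [← (wordD_congr (hpart P) l).self_of_nhds, wordD_sum _ fun p _ => hhs p]
    have hlim : Tendsto (fun P => wordD l (G P) a) atTop
        (nhds (wordD l (fun x => ∑' p, h p x) a)) := by
      have := ((hfw l a).tendsto_sum_nat).comp (tendsto_add_atTop_nat 1)
      exact this.congr hpw
    have herr : ∀ P, |wordD l (Tpoly F a (P + 1 + 1)) a - wordD l (G P) a|
        ≤ (6 ^ n * C) * Λ ^ l.length * prodSeq ν l.length * (1 / 2) ^ P := by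
      intro P
      have hN := hNpos l.length
      have e1 : (fun x => Tpoly F a (P + 1 + 1) x - G P x) =ᶠ[nhds a] fun x =>
          ∑ Q ∈ (X P).A, (X P).Φ Q x *
            (Tpoly F a (P + 1 + 1) x - Tpoly F ((X P).c Q) (P + 1) x) := by
        filter_upwards [(X P).sum_one a ha] with x h2
        simp only [mul_sub, Finset.sum_sub_distrib, ← Finset.sum_mul, h2, one_mul]
        rfl
      have e2 := (wordD_congr e1 l).self_of_nhds
      rw [wordD_sub (contDiff_Tpoly _ _ _) (hGs P)] at e2
      beta_reduce at e2
      rw [e2]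
      refine ((X P).sum_le hNN hN0 (hK0 _) (W := C * θ ^ (P + 1 + 1)) (μ := tauSeq ν 1 / η)
        (by positivity) (by positivity) hμ0.le
        (fun Q' => (contDiff_Tpoly _ _ _).sub (contDiff_Tpoly _ _ _)) ?_ l).trans ?_
      · intro Q hQ l
        have n1 := (X P).B_near a Q hQ
        have hr0P := hr0 P
        refine wordD_Tpoly_sub_le hνpos hνmono hν0 hnq hC hρ hF hR hη (hD0 P).le (hD1 P)
          ((X P).c_mem Q ((X P).B_sub a hQ)) ha ?_ ?_ l
        · refine (norm_le_of_coord (δ := 4 * r P) fun i => ?_).trans (hDr4 P)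
          rw [PiLp.sub_apply]
          linarith [n1 i]
        · intro i
          rw [sub_self, abs_zero]
          exact (hD0 P).le
      · calc _ ≤ 3 ^ n * (2 ^ n * (H ^ n) ^ (P + 1 + 1)) * (C * θ ^ (P + 1 + 1)) *
              Λ ^ l.length * prodSeq ν l.length := by
              have := hK2 P
              gcongr
          _ = (6 ^ n * C) * Λ ^ l.length * prodSeq ν l.length *
              ((H ^ n) ^ (P + 1 + 1) * θ ^ (P + 1 + 1)) := by
              rw [h6]
              ring
          _ ≤ _ := by
              gcongr ?_ * ?_
              exact (hgain' _).trans (pow_le_pow_of_le_one (by norm_num) (by norm_num) (by omega))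
    have htay : ∀ P, l.length ≤ P + 1 + 1 → wordD l (Tpoly F a (P + 1 + 1)) a = F α a := by
      intro P hP
      rw [Tpoly_eq, wordD_polyAt_self _ _ hP]
      congr 1
      exact funext fun i => count_sortedWord α i
    have hlim2 : Tendsto (fun P => wordD l (Tpoly F a (P + 1 + 1)) a - wordD l (G P) a) atTop
        (nhds 0) :=
      squeeze_zero_norm herr (hgeo _).summable.tendsto_atTop_zero
    have hlim3 := hlim2.add hlim
    rw [zero_add] at hlim3
    refine tendsto_nhds_unique hlim3 (tendsto_const_nhds.congr' ?_)
    filter_upwards [eventually_ge_atTop l.length] with P hP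
    rw [htay P (by omega)]
    ring

end Extension

/-- Corollary 5.7: if `N` is a non-quasianalytic weight sequence of moderate growth, then
its descendant `S` has moderate growth, and every Whitney jet of class `B^{S}` on a
compact `E ⊆ ℝ^n` is the jet of a function in `B^{N}(ℝ^n)`. -/
theorem stmt_16 (n : ℕ) (ν N : ℕ → ℝ)
    (hνpos : ∀ k, 0 < ν k) (hνmono : Monotone ν) (hν0 : ν 0 = 1)
    (hN : ∀ k, N k = prodSeq ν k)
    (hNws : Tendsto (fun k : ℕ => (N k) ^ (1 / (k : ℝ))) atTop atTop)
    (hnq : Summable fun k => 1 / ν k)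
    (hmg : ∃ C : ℝ, 1 ≤ C ∧ ∀ j k : ℕ, N (j + k) ≤ C ^ (j + k) * N j * N k) :
    (∃ C : ℝ, 1 ≤ C ∧ ∀ j k : ℕ,
      prodSeq (sigmaSeq ν) (j + k) ≤
        C ^ (j + k) * prodSeq (sigmaSeq ν) j * prodSeq (sigmaSeq ν) k) ∧
    (∀ E : Set (EuclideanSpace ℝ (Fin n)), IsCompact E →
      ∀ F : (Fin n → ℕ) → EuclideanSpace ℝ (Fin n) → ℝ,
        IsWhitneyJet (prodSeq (sigmaSeq ν)) E F →
        ∃ f : EuclideanSpace ℝ (Fin n) → ℝ,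
          MemBM N f ∧ ∀ α : Fin n → ℕ, ∀ a ∈ E, pderivMulti α f a = F α a) := by
  obtain rfl : N = prodSeq ν := funext hN
  obtain ⟨H, hH, hp, hd⟩ := exists_doubling hνpos hνmono hν0 hmg
  refine ⟨⟨2 * H, by linarith, moderate_of_doubling (sigmaSeq_pos hνpos hnq) rfl (by linarith)
    (sigmaSeq_doubling hνpos hνmono hnq hH hd)⟩, fun E hE F hF => ?_⟩
  obtain ⟨_, C, hC, ρ, hρ, h1, h2⟩ := hF
  exact exists_extension hνpos hνmono hν0 hnq hH hp hd hE hC hρ h1 h2
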